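/- arXiv:1712.05539 — 3 statements merged into one kernel-verified Lean document; each statement's English description precedes it below -/
import Mathlib

section
/- Let d ≥ 3 and n ≥ 3. Consider any d-dimensional rectilinear drawing of the complete balanced d-partite d-uniform hypergraph K_{d×n}^d, i.e., an injective map v : Fin d × Fin n → ℝ^d whose image is a set of nd points in general position in ℝ^d (no d+1 of the points lie on a common hyperplane), where for each i ∈ Fin d the set {v(i,j) : j ∈ Fin n} is the i-th part. Then the number of crossing pairs of hyperedges, i.e., the number of unordered pairs {f, g} of functions f, g : Fin d → Fin n with f(i) ≠ g(i) for every i ∈ Fin d such that the intrinsic (relative) interiors of the convex hulls of {v(i, f(i)) : i ∈ Fin d} and {v(i, g(i)) : i ∈ Fin d} have a common point, is at least n^d (n-1)^d / (9 · 2^d). -/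
open Finset

/-- median of three reals -/
noncomputable def med3 (x : Fin 3 → ℝ) : ℝ :=
  max (min (x 0) (x 1)) (min (max (x 0) (x 1)) (x 2))

lemma med3_neg (x : Fin 3 → ℝ) : med3 (-x) = - med3 x := by
  simp only [med3, Pi.neg_apply]
  rcases le_total (x 0) (x 1) with h1 | h1 <;> rcases le_total (x 0) (x 2) with h2 | h2 <;>
    rcases le_total (x 1) (x 2) with h3 | h3 <;> 
    simp [*, max_def, min_def] <;> grind

lemma med3_cont : Continuous med3 := by
  unfold med3; fun_prop

lemma med3_zero (x : Fin 3 → ℝ) (h : med3 x = 0) :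
    ∃ i k : Fin 3, i ≠ k ∧ ∃ α β : ℝ, 0 ≤ α ∧ 0 ≤ β ∧
      x = Pi.single i α - Pi.single k β := by
  have key : ∀ i j k : Fin 3, i ≠ j → j ≠ k → i ≠ k → x i ≤ x j → x j ≤ x k → x j = 0 →
    ∃ i k : Fin 3, i ≠ k ∧ ∃ α β : ℝ, 0 ≤ α ∧ 0 ≤ β ∧
      x = Pi.single i α - Pi.single k β := by
    intro i j k h1 h2 h3 h4 h5 h6
    refine ⟨k, i, h3.symm, x k, - x i, by linarith, by linarith, ?_⟩
    funext m
    have : m = i ∨ m = j ∨ m = k := by omega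
    rcases this with rfl | rfl | rfl
    · simp [h3]
    · simp [h1.symm, h2, h6, h1]
    · simp [h3.symm]
  simp only [med3] at h
  rcases le_total (x 0) (x 1) with h1 | h1 <;> rcases le_total (x 0) (x 2) with h2 | h2 <;>
    rcases le_total (x 1) (x 2) with h3 | h3 <;> simp [*] at h
  · exact key 0 1 2 (by decide) (by decide) (by decide) h1 h3 (by grind)
  · exact key 0 2 1 (by decide) (by decide) (by decide) h2 h3 (by grind)
  · exact key 0 1 2 (by decide) (by decide) (by decide) h1 h3 (by grind)
  · exact key 2 0 1 (by decide) (by decide) (by decide) h2 h1 (by grind)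
  · exact key 1 0 2 (by decide) (by decide) (by decide) h1 h2 (by grind)
  · exact key 1 0 2 (by decide) (by decide) (by decide) h1 h2 (by grind)
  · exact key 1 2 0 (by decide) (by decide) (by decide) h3 h2 (by grind)
  · exact key 2 1 0 (by decide) (by decide) (by decide) h3 h1 (by grind)

lemma med3_ivt (x y : Fin 3 → ℝ) (h : med3 x * med3 y ≤ 0) :
    ∃ t : ℝ, 0 ≤ t ∧ t ≤ 1 ∧ med3 (t • x + (1 - t) • y) = 0 := by
  have hc : Continuous (fun t : ℝ => med3 (t • x + (1 - t) • y)) := by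
    apply med3_cont.comp; fun_prop
  have h0 : (0:ℝ) ∈ Set.uIcc ((fun t : ℝ => med3 (t • x + (1 - t) • y)) 0)
      ((fun t : ℝ => med3 (t • x + (1 - t) • y)) 1) := by
    simp [Set.mem_uIcc]
    rcases mul_nonpos_iff.1 h with h | h <;> tauto
  obtain ⟨t, ht, h⟩ := intermediate_value_uIcc (hc.continuousOn (s := Set.uIcc 0 1)) h0
  rw [Set.uIcc_of_le zero_le_one] at ht
  exact ⟨t, ht.1, ht.2, h⟩

lemma hexagon (w : Fin 3 → Fin 3 → ℝ) :
    ∃ j l : Fin 3, j ≠ l ∧ ∃ γ δ : ℝ, 0 ≤ γ ∧ 0 ≤ δ ∧ γ + δ = 1 ∧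
      med3 (δ • w l - γ • w j) = 0 := by
  have main : ∀ j l : Fin 3, j ≠ l → med3 (w l) * med3 (-w j) ≤ 0 → 
      ∃ j l : Fin 3, j ≠ l ∧ ∃ γ δ : ℝ, 0 ≤ γ ∧ 0 ≤ δ ∧ γ + δ = 1 ∧
      med3 (δ • w l - γ • w j) = 0 := by
    intro j l hjl h
    obtain ⟨t, h0, h1, h⟩ := med3_ivt _ _ h
    refine ⟨j, l, hjl, 1 - t, t, by linarith, h0, by ring, ?_⟩
    rw [← h]; congr 1; simp [sub_eq_add_neg]
  by_cases h1 : med3 (w 0) * med3 (-w 1) ≤ 0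
  · exact main _ _ (by decide) h1
  by_cases h2 : med3 (w 2) * med3 (-w 1) ≤ 0
  · exact main _ _ (by decide) h2
  refine main 0 2 (by decide) ?_
  rw [med3_neg] at *
  push Not at h1 h2
  by_contra h3
  push Not at h3
  have := mul_pos (mul_pos h1 h2) h3
  nlinarith [sq_nonneg (med3 (w 0) * med3 (w 1) * med3 (w 2))]

lemma coreC {V : Type*} [NormedAddCommGroup V] [NormedSpace ℝ V] [FiniteDimensional ℝ V] {e : ℕ}
    (hV : Module.finrank ℝ V = e + 3) (P Q : Fin 3 → V) (A B : Fin e → V)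
    (hli : LinearIndependent ℝ (Sum.elim P A)) :
    ∃ i k j l : Fin 3, i ≠ k ∧ j ≠ l ∧ ∃ α β γ δ s : ℝ, 0 ≤ α ∧ 0 ≤ β ∧ 0 ≤ γ ∧ 0 ≤ δ ∧
      γ + δ = 1 ∧ 0 < s ∧ ∃ τ : Fin e → ℝ,
      α • P i + γ • Q j + ∑ m, τ m • (A m - s • B m) = β • P k + δ • Q l := by
  have h1 : ∀ᶠ s in nhds (0:ℝ), LinearIndependent ℝ (Sum.elim P (fun m => A m - s • B m)) := by
    have hc : Continuous (fun s : ℝ => (Sum.elim P (fun m => A m - s • B m) : Fin 3 ⊕ Fin e → V)) := by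
      apply continuous_pi
      rintro (i | i) <;> simp <;> fun_prop
    have := isOpen_setOfPred_linearIndependent (𝕜 := ℝ) (E := V) (ι := Fin 3 ⊕ Fin e)
    have h2 := (this.preimage hc).mem_nhds (x := 0) (by simpa using hli)
    exact h2
  obtain ⟨s, hs, hs0⟩ := ((h1.filter_mono nhdsWithin_le_nhds).and
    (self_mem_nhdsWithin : Set.Ioi (0:ℝ) ∈ nhdsWithin 0 (Set.Ioi 0))).exists
  have hcard : Fintype.card (Fin 3 ⊕ Fin e) = Module.finrank ℝ V := by
    simp [hV, add_comm]
  let b := basisOfLinearIndependentOfCardEqFinrank hs hcard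
  obtain ⟨j, l, hjl, γ, δ, hγ, hδ, hsum, hmed⟩ := hexagon (fun j i => b.repr (Q j) (Sum.inl i))
  obtain ⟨i, k, hik, α, β, hα, hβ, hx⟩ := med3_zero _ hmed
  refine ⟨i, k, j, l, hik, hjl, α, β, γ, δ, s, hα, hβ, hγ, hδ, hsum, hs0,
    fun m => b.repr (δ • Q l - γ • Q j) (Sum.inr m), ?_⟩
  have h3 := b.sum_repr (δ • Q l - γ • Q j)
  rw [Fintype.sum_sum_type] at h3
  have h4 : ∀ i', b.repr (δ • Q l - γ • Q j) (Sum.inl i') = 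
      (Pi.single i α - Pi.single k β : Fin 3 → ℝ) i' := by
    intro i'; rw [← hx]; simp
  have hb1 : ∀ i', b (Sum.inl i') = P i' := by intro i'; simp [b]
  have hb2 : ∀ i', b (Sum.inr i') = A i' - s • B i' := by intro i'; simp [b]
  simp only [h4, hb1, hb2, Pi.sub_apply, sub_smul, Finset.sum_sub_distrib, Pi.single_apply, ite_smul, zero_smul, Finset.sum_ite_eq', Finset.mem_univ, if_true] at h3
  have h5 : ∀ X : V, α • P i - β • P k + X = δ • Q l - γ • Q j → 
     α • P i + γ • Q j + X = β • P k + δ • Q l := by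
    intro X hX
    rw [← sub_eq_zero] at hX ⊢
    rw [← hX]; abel
  exact h5 _ h3

lemma coreD {V : Type*} [AddCommGroup V] [Module ℝ V] [FiniteDimensional ℝ V] {N : ℕ}
    (hV : Module.finrank ℝ V = N) {ι : Type*} [Fintype ι] [DecidableEq ι] (hN : N ≤ Fintype.card ι)
    (u : ι → V) (hu : ∀ T : Finset ι, T.card = N → LinearIndependent ℝ (fun i : T => u i))
    (z : ι → ℝ) (hz : ∀ i, 0 ≤ z i) (hz0 : z ≠ 0) (hsum : ∑ i, z i • u i = 0) :
    ∃ z' : ι → ℝ, (∀ i, 0 < z' i) ∧ ∑ i, z' i • u i = 0 := by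
  by_cases hc : (univ.filter (fun i => z i ≠ 0)).card ≤ N
  · exfalso
    obtain ⟨T, hT, hTc⟩ := Finset.exists_superset_card_eq hc hN
    have h1 := Fintype.linearIndependent_iff.1 (hu T hTc) (fun i => z i) (by
      rw [← hsum, Finset.sum_coe_sort T (fun i => z i • u i)]
      apply Finset.sum_subset (subset_univ _)
      intro i _ hi
      have : z i = 0 := by
        by_contra h
        exact hi (hT (by simp [h]))
      simp [this])
    apply hz0
    funext i
    by_contra h
    exact h (h1 ⟨i, hT (by simpa using h)⟩)
  · push Not at hc
    obtain ⟨T, hT, hTc⟩ := Finset.exists_subset_card_eq hc.le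
    have hTpos : ∀ i ∈ T, 0 < z i := by
      intro i hi
      have := hT hi
      simp at this
      exact lt_of_le_of_ne (hz i) (Ne.symm this)
    have hcard : Fintype.card T = Module.finrank ℝ V := by simp [hTc, hV]
    let b := basisOfLinearIndependentOfCardEqFinrank' _ (hu T hTc) hcard
    let w := ∑ i ∈ Tᶜ, u i
    let c : ι → ℝ := fun i => if h : i ∈ T then - b.repr w ⟨i, h⟩ else 1
    have hcs : ∑ i, c i • u i = 0 := by
      rw [← Finset.sum_add_sum_compl T]
      have e1 : ∑ i ∈ Tᶜ, c i • u i = w := by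
        apply Finset.sum_congr rfl
        intro i hi
        simp [c, Finset.mem_compl.1 hi]
      have e2 : ∑ i ∈ T, c i • u i = - w := by
        rw [← Finset.sum_coe_sort T]
        conv_rhs => rw [← b.sum_repr w]
        rw [← Finset.sum_neg_distrib]
        apply Finset.sum_congr rfl
        intro i _
        simp [c, b]
      rw [e1, e2]; simp
    have hev : ∀ᶠ ε in nhdsWithin (0:ℝ) (Set.Ioi 0), ∀ i, 0 < z i + ε * c i := by
      rw [Filter.eventually_all]
      intro i
      by_cases hi : i ∈ T
      · apply Filter.Eventually.filter_mono nhdsWithin_le_nhds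
        have : Continuous (fun ε : ℝ => z i + ε * c i) := by fun_prop
        exact this.continuousAt.eventually (lt_mem_nhds (by simpa using hTpos i hi))
      · filter_upwards [self_mem_nhdsWithin] with ε hε
        have : 0 < ε := hε
        simp [c, hi]; linarith [hz i]
    obtain ⟨ε, hε⟩ := hev.exists
    refine ⟨fun i => z i + ε * c i, hε, ?_⟩
    simp only [add_smul, mul_smul, Finset.sum_add_distrib, ← Finset.smul_sum, hsum, hcs]
    simp

lemma coreE {E : Type*} [NormedAddCommGroup E] [NormedSpace ℝ E] [FiniteDimensional ℝ E]
    {ι : Type*} [Fintype ι] [DecidableEq ι] (F : ι → E)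
    (hF : LinearIndependent ℝ (fun i => (F i, (1:ℝ)))) (a : ι → ℝ) (ha : ∀ i, 0 < a i)
    (hs : ∑ i, a i = 1) :
    ∑ i, a i • F i ∈ intrinsicInterior ℝ (convexHull ℝ (Set.range F)) := by
  have hmem : ∑ i, a i • F i ∈ convexHull ℝ (Set.range F) := by
    apply (convex_convexHull ℝ _).sum_mem (fun i _ => (ha i).le) hs
    intro i _
    exact subset_convexHull _ _ ⟨i, rfl⟩
  have hinj : Function.Injective (Fintype.linearCombination ℝ (fun i => (F i, (1:ℝ)))) :=
    linearIndependent_iff_injective_fintypeLinearCombination.1 hF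
  obtain ⟨L, hL⟩ := LinearMap.exists_leftInverse_of_injective _ (LinearMap.ker_eq_bot.2 hinj)
  have hLw : ∀ w : ι → ℝ, ∑ i, w i = 1 → L (∑ i, w i • F i, 1) = w := by
    intro w hw
    have := LinearMap.congr_fun hL w
    simp only [LinearMap.comp_apply, Fintype.linearCombination_apply, LinearMap.id_apply] at this
    conv_rhs => rw [← this]
    congr 1
    ext
    · simp [Prod.fst_sum]
    · simp [Prod.snd_sum, hw]
  have hLc : Continuous L := L.continuous_of_finiteDimensional
  rw [mem_intrinsicInterior]
  refine ⟨⟨_, subset_affineSpan _ _ hmem⟩, ?_, rfl⟩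
  rw [mem_interior]
  refine ⟨{y | ∀ i, 0 < L ((y : E), 1) i}, ?_, ?_, ?_⟩
  · rintro ⟨y, hy⟩ hyp
    simp only [Set.mem_ofPred_eq] at hyp
    rw [affineSpan_convexHull] at hy
    obtain ⟨w, hw, rfl⟩ := eq_affineCombination_of_mem_affineSpan_of_fintype hy
    have hlc := Finset.affineCombination_eq_linear_combination univ F w hw
    rw [hlc, hLw w hw] at hyp
    change univ.affineCombination ℝ F w ∈ convexHull ℝ (Set.range F)
    rw [hlc]
    apply (convex_convexHull ℝ _).sum_mem (fun i _ => (hyp i).le) hw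
    intro i _
    exact subset_convexHull _ _ ⟨i, rfl⟩
  · rw [Set.ofPred_forall]
    apply isOpen_iInter_of_finite
    intro i
    apply isOpen_lt continuous_const
    have : Continuous fun y : affineSpan ℝ (convexHull ℝ (Set.range F)) => L ((y:E), 1) := by
      fun_prop
    exact (continuous_apply i).comp this
  · intro i
    simp only [hLw a hs]
    exact ha i

lemma hatIndep {d n : ℕ} (hdn : d + 1 ≤ d * n)
    (v : Fin d × Fin n → EuclideanSpace ℝ (Fin d))
    (hgen : ∀ s : Finset (Fin d × Fin n), s.card = d + 1 →
      AffineIndependent ℝ (fun i : s => v i.1))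
    {ι : Type*} [Fintype ι] (u : ι → Fin d × Fin n) (hu : Function.Injective u)
    (hc : Fintype.card ι ≤ d + 1) :
    LinearIndependent ℝ (fun i => (v (u i), (1:ℝ))) := by
  classical
  have h1 : (univ.image u).card ≤ d + 1 := by
    rw [Finset.card_image_of_injective _ hu]; simpa using hc
  obtain ⟨T, hT, hTc⟩ := Finset.exists_superset_card_eq (n := d + 1) h1 (by simpa using hdn)
  have h2 := hgen T hTc
  have h3 : LinearIndependent ℝ (fun i : T => (v i.1, (1:ℝ))) := by
    rw [Fintype.linearIndependent_iff]
    intro w hw i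
    have ha := congrArg Prod.fst hw
    have hb := congrArg Prod.snd hw
    simp [Prod.fst_sum] at ha
    simp [Prod.snd_sum] at hb
    exact affineIndependent_iff.1 h2 univ w (by simpa using hb) (by simpa using ha) i (mem_univ _)
  let r : ι → T := fun i => ⟨u i, hT (by simp)⟩
  have hr : Function.Injective r := fun i j h => hu (by simpa [r] using h)
  exact h3.comp r hr

lemma crossing_of_weights {d n : ℕ} (hd : 1 ≤ d) (hdn : d + 1 ≤ d * n)
    (v : Fin d × Fin n → EuclideanSpace ℝ (Fin d))
    (hgen : ∀ s : Finset (Fin d × Fin n), s.card = d + 1 →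
      AffineIndependent ℝ (fun i : s => v i.1))
    (f g : Fin d → Fin n) (hfg : ∀ i, f i ≠ g i) (a b : Fin d → ℝ) (ha : ∀ i, 0 ≤ a i)
    (hb : ∀ i, 0 ≤ b i) (h0 : ∃ i, a i ≠ 0 ∨ b i ≠ 0)
    (hs : ∑ i, a i • (v (i, f i), (1:ℝ)) = ∑ i, b i • (v (i, g i), (1:ℝ))) :
    (intrinsicInterior ℝ (convexHull ℝ (Set.range fun i : Fin d => v (i, f i))) ∩
      intrinsicInterior ℝ (convexHull ℝ (Set.range fun i : Fin d => v (i, g i)))).Nonempty := by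
  classical
  let ix : Fin d ⊕ Fin d → Fin d × Fin n := Sum.elim (fun i => (i, f i)) (fun i => (i, g i))
  have hix : Function.Injective ix := by
    rintro (i | i) (j | j) h
    · simp [ix] at h; simp [h.1]
    · simp [ix] at h; obtain ⟨rfl, h⟩ := h; exact absurd h (hfg i)
    · simp [ix] at h; obtain ⟨rfl, h⟩ := h; exact absurd h.symm (hfg i)
    · simp [ix] at h; simp [h.1]
  let sg : Fin d ⊕ Fin d → ℝˣ := Sum.elim (fun _ => 1) (fun _ => -1)
  obtain ⟨z, hz, hzs⟩ := coreD (V := EuclideanSpace ℝ (Fin d) × ℝ) (N := d + 1) (by simp)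
    (ι := Fin d ⊕ Fin d) (by simp; omega) (fun i => sg i • (v (ix i), (1:ℝ)))
    (by
      intro T hT
      have h1 := hatIndep hdn v hgen (fun i : T => ix i.1)
        (fun i j h => Subtype.ext (hix h)) (by simp [hT])
      exact h1.units_smul (fun i : T => sg i.1))
    (Sum.elim a b)
    (by rintro (i | i) <;> simp [ha, hb])
    (by
      obtain ⟨i, hi⟩ := h0
      intro h
      have e1 := congrFun h (Sum.inl i)
      have e2 := congrFun h (Sum.inr i)
      simp at e1 e2
      tauto)
    (by
      rw [Fintype.sum_sum_type]
      simp only [Sum.elim_inl, Sum.elim_inr, sg, ix, one_smul, neg_smul, smul_neg, Units.neg_smul]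
      rw [Finset.sum_neg_distrib, hs]; simp)
  rw [Fintype.sum_sum_type] at hzs
  simp only [Sum.elim_inl, Sum.elim_inr, sg, ix, one_smul, smul_neg, Units.neg_smul] at hzs
  rw [Finset.sum_neg_distrib, ← sub_eq_add_neg, sub_eq_zero] at hzs
  have e1 := congrArg Prod.fst hzs
  have e2 := congrArg Prod.snd hzs
  simp [Prod.fst_sum] at e1
  simp [Prod.snd_sum] at e2
  have : Nonempty (Fin d) := ⟨⟨0, hd⟩⟩
  set c := ∑ i, z (Sum.inl i) with hcdef
  have hcpos : 0 < c := Finset.sum_pos (fun i _ => hz _) univ_nonempty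
  have hF := hatIndep hdn v hgen (fun i => (i, f i)) (fun i j h => (Prod.mk.inj h).1) (by simp)
  have hG := hatIndep hdn v hgen (fun i => (i, g i)) (fun i j h => (Prod.mk.inj h).1) (by simp)
  have m1 := coreE _ hF (fun i => c⁻¹ * z (Sum.inl i)) (fun i => mul_pos (inv_pos.2 hcpos) (hz _))
    (by rw [← Finset.mul_sum, ← hcdef]; exact inv_mul_cancel₀ hcpos.ne')
  have m2 := coreE _ hG (fun i => c⁻¹ * z (Sum.inr i)) (fun i => mul_pos (inv_pos.2 hcpos) (hz _))
    (by rw [← Finset.mul_sum, ← e2]; exact inv_mul_cancel₀ hcpos.ne')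
  refine ⟨_, m1, ?_⟩
  convert m2 using 1
  simp only [mul_smul, ← Finset.smul_sum, e1]

lemma crossing_exists {e n : ℕ} (hn : 3 ≤ n)
    (v : Fin (e+2) × Fin n → EuclideanSpace ℝ (Fin (e+2)))
    (hgen : ∀ s : Finset (Fin (e+2) × Fin n), s.card = (e+2) + 1 →
      AffineIndependent ℝ (fun i : s => v i.1))
    (S : Fin (e+2) → Finset (Fin n)) (h0 : (S 0).card = 3) (h1 : (S 1).card = 3)
    (h2 : ∀ m : Fin e, (S m.succ.succ).card = 2) :
    ∃ f g : Fin (e+2) → Fin n, (∀ i, f i ≠ g i) ∧ (∀ i, f i ∈ S i ∧ g i ∈ S i) ∧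
    (intrinsicInterior ℝ (convexHull ℝ (Set.range fun i : Fin (e+2) => v (i, f i))) ∩
      intrinsicInterior ℝ (convexHull ℝ (Set.range fun i : Fin (e+2) => v (i, g i)))).Nonempty := by
  have hdn : (e + 2) + 1 ≤ (e + 2) * n := by nlinarith
  let p := (S 0).orderEmbOfFin h0
  let q := (S 1).orderEmbOfFin h1
  let A : Fin e → Fin n := fun m => (S m.succ.succ).orderEmbOfFin (h2 m) 0
  let B : Fin e → Fin n := fun m => (S m.succ.succ).orderEmbOfFin (h2 m) 1
  have hAB : ∀ m, A m ≠ B m := by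
    intro m h
    have := ((S m.succ.succ).orderEmbOfFin (h2 m)).injective h
    exact absurd this (by decide)
  have hA : ∀ m, A m ∈ S m.succ.succ := fun m => Finset.orderEmbOfFin_mem _ _ _
  have hB : ∀ m, B m ∈ S m.succ.succ := fun m => Finset.orderEmbOfFin_mem _ _ _
  have hp : ∀ m, p m ∈ S 0 := fun m => Finset.orderEmbOfFin_mem _ _ _
  have hq : ∀ m, q m ∈ S 1 := fun m => Finset.orderEmbOfFin_mem _ _ _
  let H : Fin (e+2) × Fin n → EuclideanSpace ℝ (Fin (e+2)) × ℝ := fun x => (v x, 1)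
  let u : Fin 3 ⊕ Fin e → Fin (e+2) × Fin n :=
    Sum.elim (fun i => (0, p i)) (fun m => (m.succ.succ, A m))
  have hu : Function.Injective u := by
    rintro (i | i) (j | j) h
    · simp [u] at h; simp [h]
    · simp [u] at h; exact absurd h.1.symm (Fin.succ_ne_zero _)
    · simp [u] at h
    · simp [u] at h; simp [h.1]
  have hli := hatIndep hdn v hgen u hu (by simp [add_comm, add_left_comm])
  have hli' : LinearIndependent ℝ (Sum.elim (fun i => H (0, p i)) (fun m => H (m.succ.succ, A m))) := by
    convert hli using 1
    funext x
    rcases x with x | x <;> rfl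
  obtain ⟨i, k, j, l, hik, hjl, α, β, γ, δ, s, hα, hβ, hγ, hδ, hsum, hs, τ, heq⟩ :=
    coreC (V := EuclideanSpace ℝ (Fin (e+2)) × ℝ) (e := e) (by simp) _ (fun j => H (1, q j)) _
      (fun m => H (m.succ.succ, B m)) hli'
  let f : Fin (e+2) → Fin n := Fin.cons (p i) (Fin.cons (q j) (fun m => if 0 ≤ τ m then A m else B m))
  let g : Fin (e+2) → Fin n := Fin.cons (p k) (Fin.cons (q l) (fun m => if 0 ≤ τ m then B m else A m))
  let a : Fin (e+2) → ℝ := Fin.cons α (Fin.cons γ (fun m => if 0 ≤ τ m then τ m else s * (-τ m)))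
  let b : Fin (e+2) → ℝ := Fin.cons β (Fin.cons δ (fun m => if 0 ≤ τ m then s * τ m else -τ m))
  have hfg : ∀ i, f i ≠ g i := by
    refine Fin.cases ?_ (Fin.cases ?_ ?_)
    · simp [f, g, hik]
    · simp [f, g, hjl]
    · intro m
      by_cases h : 0 ≤ τ m
      · simpa [f, g, h] using hAB m
      · simpa [f, g, h] using (hAB m).symm
  refine ⟨f, g, hfg, ?_, ?_⟩
  · refine Fin.cases ?_ (Fin.cases ?_ ?_)
    · exact ⟨hp _, hp _⟩
    · exact ⟨hq _, hq _⟩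
    · intro m
      by_cases h : 0 ≤ τ m
      · simpa [f, g, h] using ⟨hA m, hB m⟩
      · simpa [f, g, h] using ⟨hB m, hA m⟩
  · refine crossing_of_weights (by omega) hdn v hgen f g hfg a b ?_ ?_ ?_ ?_
    · refine Fin.cases hα (Fin.cases hγ ?_)
      intro m
      by_cases h : 0 ≤ τ m
      · simp [a, h]
      · push Not at h
        simp [a, not_le.2 h]; nlinarith
    · refine Fin.cases hβ (Fin.cases hδ ?_)
      intro m
      by_cases h : 0 ≤ τ m
      · simp [b, h]; positivity
      · push Not at h
        simp [b, not_le.2 h]; exact h.le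
    · refine ⟨1, ?_⟩
      change γ ≠ 0 ∨ δ ≠ 0
      by_contra hh
      push Not at hh
      linarith [hh.1, hh.2]
    · change ∑ i, a i • H (i, f i) = ∑ i, b i • H (i, g i)
      rw [← sub_eq_zero, ← Finset.sum_sub_distrib, Fin.sum_univ_succ, Fin.sum_univ_succ]
      have hm : ∀ m : Fin e, a m.succ.succ • H (m.succ.succ, f m.succ.succ) -
          b m.succ.succ • H (m.succ.succ, g m.succ.succ) =
          τ m • (H (m.succ.succ, A m) - s • H (m.succ.succ, B m)) := by
        intro m
        by_cases h : 0 ≤ τ m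
        · simp only [a, b, f, g, h, Fin.cons_succ, if_true]; module
        · simp only [a, b, f, g, h, Fin.cons_succ, if_false]; module
      rw [Finset.sum_congr rfl (fun m _ => hm m)]
      change (α • H (0, p i) - β • H (0, p k)) + ((γ • H (1, q j) - δ • H (1, q l)) + _) = 0
      rw [← sub_eq_zero] at heq
      rw [← heq]; abel

lemma fiber_card {n k : ℕ} (x y : Fin n) (hxy : x ≠ y) :
    ((powersetCard (k+2) (univ : Finset (Fin n))).filter (fun T => x ∈ T ∧ y ∈ T)).card
      ≤ (n - 2).choose k := by
  classical
  have : (n - 2).choose k = (powersetCard k ((univ : Finset (Fin n)) \ {x, y})).card := by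
    rw [card_powersetCard, card_sdiff_of_subset (subset_univ _), card_pair hxy]; simp
  rw [this]
  apply Finset.card_le_card_of_injOn (fun T => T \ {x, y})
  · intro T hT
    simp only [coe_filter, Set.mem_ofPred_eq, mem_powersetCard] at hT
    have hsub : {x, y} ⊆ T := by
      intro a ha; simp at ha; rcases ha with rfl | rfl <;> tauto
    refine mem_coe.2 (mem_powersetCard.2 ⟨sdiff_subset_sdiff (subset_univ _) le_rfl, ?_⟩)
    rw [card_sdiff_of_subset hsub, card_pair hxy]; omega
  · intro T hT T' hT' h
    simp only [coe_filter, Set.mem_ofPred_eq] at hT hT'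
    ext a
    by_cases ha : a = x ∨ a = y
    · rcases ha with rfl | rfl <;> tauto
    · have := congrArg (a ∈ ·) h
      simp at this
      tauto

theorem crossing_lower_bound_improved (d n : ℕ) (hd : 3 ≤ d) (hn : 3 ≤ n)
    (v : Fin d × Fin n → EuclideanSpace ℝ (Fin d))
    (hinj : Function.Injective v)
    (hgen : ∀ s : Finset (Fin d × Fin n), s.card = d + 1 →
      AffineIndependent ℝ (fun i : s => v i.1)) :
    (n : ℝ) ^ d * ((n : ℝ) - 1) ^ d / (9 * 2 ^ d) ≤
      ({P : Sym2 (Fin d → Fin n) | ∃ f g : Fin d → Fin n,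
          P = s(f, g) ∧ (∀ i : Fin d, f i ≠ g i) ∧
          (intrinsicInterior ℝ (convexHull ℝ (Set.range fun i : Fin d => v (i, f i))) ∩
           intrinsicInterior ℝ (convexHull ℝ (Set.range fun i : Fin d => v (i, g i)))).Nonempty} :
        Set (Sym2 (Fin d → Fin n))).ncard := by
  classical
  obtain ⟨e, rfl⟩ : ∃ e, d = e + 2 := ⟨d - 2, by omega⟩
  set X : Set (Sym2 (Fin (e+2) → Fin n)) := {P | ∃ f g : Fin (e+2) → Fin n,
          P = s(f, g) ∧ (∀ i : Fin (e+2), f i ≠ g i) ∧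
          (intrinsicInterior ℝ (convexHull ℝ (Set.range fun i : Fin (e+2) => v (i, f i))) ∩
           intrinsicInterior ℝ (convexHull ℝ (Set.range fun i : Fin (e+2) => v (i, g i)))).Nonempty}
    with hX
  let K : Fin (e+2) → ℕ := Fin.cons 1 (Fin.cons 1 (fun _ => 0))
  let 𝒮 : Finset (Fin (e+2) → Finset (Fin n)) :=
    Fintype.piFinset (fun i => powersetCard (K i + 2) univ)
  have hcard𝒮 : 𝒮.card = n.choose 3 * (n.choose 3 * n.choose 2 ^ e) := by
    simp [𝒮, Fintype.card_piFinset, Fin.prod_univ_succ, K]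
  have hex : ∀ S : Fin (e+2) → Finset (Fin n), ∃ P : Sym2 (Fin (e+2) → Fin n), S ∈ 𝒮 →
      P ∈ X ∧ ∀ f ∈ P, ∀ i, f i ∈ S i := by
    intro S
    by_cases hS : S ∈ 𝒮
    · simp only [𝒮, Fintype.mem_piFinset, mem_powersetCard] at hS
      obtain ⟨f, g, h1, h2, h3⟩ := crossing_exists hn v hgen S (hS 0).2 (hS 1).2
        (fun m => (hS m.succ.succ).2)
      refine ⟨s(f, g), fun _ => ⟨⟨f, g, rfl, h1, h3⟩, ?_⟩⟩
      intro f' hf' i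
      rcases Sym2.mem_iff.1 hf' with rfl | rfl
      · exact (h2 i).1
      · exact (h2 i).2
    · exact ⟨s(fun _ => ⟨0, by omega⟩, fun _ => ⟨0, by omega⟩), fun h => absurd h hS⟩
  choose Φ hΦ using hex
  have hXfin : X.Finite := Set.toFinite _
  have hcount : 𝒮.card ≤ ((n - 2) * (n - 2)) * hXfin.toFinset.card := by
    apply Finset.card_le_mul_card_image_of_maps_to (f := Φ)
    · intro S hS
      exact hXfin.mem_toFinset.2 (hΦ S hS).1
    · intro P hP
      obtain ⟨f, g, rfl, hfg, -⟩ : P ∈ X := hXfin.mem_toFinset.1 hP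
      calc _ ≤ (Fintype.piFinset (fun i => (powersetCard (K i + 2) (univ : Finset (Fin n))).filter
              (fun T => f i ∈ T ∧ g i ∈ T))).card := by
            apply Finset.card_le_card
            intro S hS
            obtain ⟨hS, hP⟩ := Finset.mem_filter.1 hS
            have hm := (hΦ S hS).2
            rw [hP] at hm
            rw [Fintype.mem_piFinset]
            intro i
            exact Finset.mem_filter.2 ⟨Fintype.mem_piFinset.1 hS i,
              hm f (Sym2.mem_mk_left _ _) i, hm g (Sym2.mem_mk_right _ _) i⟩
        _ ≤ ∏ i, (n - 2).choose (K i) := by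
            rw [Fintype.card_piFinset]
            exact Finset.prod_le_prod' (fun i _ => fiber_card _ _ (hfg i))
        _ = _ := by simp [Fin.prod_univ_succ, K]
  rw [hcard𝒮, ← Set.ncard_eq_toFinset_card X hXfin] at hcount
  have hc2 : (n.choose 2 : ℝ) = n * (n - 1) / 2 := Nat.cast_choose_two ℝ n
  have hc3 : (n.choose 3 : ℝ) = n * (n - 1) * (n - 2) / 6 := by
    have := Nat.choose_succ_right_eq n 2
    have h2 := congrArg (Nat.cast : ℕ → ℝ) this
    push_cast [Nat.cast_sub (show 2 ≤ n by omega)] at h2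
    rw [hc2] at h2
    norm_num at h2
    linarith
  have hR : (n.choose 3 : ℝ) * (n.choose 3 * n.choose 2 ^ e) ≤
      ((n:ℝ) - 2) * (n - 2) * X.ncard := by
    have := (Nat.cast_le (α := ℝ)).2 hcount
    push_cast [Nat.cast_sub (show 2 ≤ n by omega)] at this
    exact this
  rw [hc2, hc3] at hR
  have hn' : (3:ℝ) ≤ n := by exact_mod_cast hn
  have hpos : 0 < ((n:ℝ) - 2) * (n - 2) := by nlinarith
  refine le_of_mul_le_mul_left (le_trans (le_of_eq ?_) hR) hpos
  rw [div_pow, mul_pow]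
  field_simp
  ring
end

section
/- Let d ≥ 3 and let v_1, …, v_{2d+2} be 2d+2 points in general position in ℝ^d (every d+1 of them affinely independent), partitioned into d parts L_1 = {v_1, v_2, v_3}, L_2 = {v_4, v_5, v_6}, and L_k = {v_{2k+1}, v_{2k+2}} for 3 ≤ k ≤ d. Then there exist disjoint sets U', W' ⊆ {v_1, …, v_{2d+2}} with |U'| = |W'| = d, |U' ∩ L_i| = 1 and |W' ∩ L_i| = 1 for every i with 1 ≤ i ≤ d, such that the convex hulls of U' and W' contain a common point in their relative (intrinsic) interiors. Equivalently, every d-dimensional rectilinear drawing of K_{2×3+(d-2)×2}^d contains at least one crossing pair of hyperedges. -/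
/-- Part index (0-based) of the `j`-th vertex (0-based) of `K_{2×3+(d-2)×2}^d`:
vertices `0,1,2` form part `0`, vertices `3,4,5` form part `1`, and vertices
`2k, 2k+1` (for `k ≥ 3`) form part `k - 1`. -/
def partIdx (j : ℕ) : ℕ := if j < 3 then 0 else if j < 6 then 1 else j / 2 - 1

lemma relint_aux {ι E : Type*} [Fintype ι] [DecidableEq ι] [NormedAddCommGroup E] [NormedSpace ℝ E]
    [FiniteDimensional ℝ E] (b : AffineBasis ι ℝ E) (U : Finset ι) (w : ι → ℝ)
    (hw : ∀ i ∈ U, 0 < w i) (hs : ∑ i ∈ U, w i = 1) :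
    ∑ i ∈ U, w i • b i ∈ intrinsicInterior ℝ (convexHull ℝ (b '' (U : Set ι))) := by
  have hmem : ∑ i ∈ U, w i • b i ∈ convexHull ℝ (b '' (U : Set ι)) :=
    (convex_convexHull ℝ _).sum_mem (fun i hi => (hw i hi).le) hs
      (fun i hi => subset_convexHull ℝ _ ⟨i, hi, rfl⟩)
  have hspan := subset_affineSpan ℝ _ hmem
  have hz : ∀ y ∈ affineSpan ℝ (convexHull ℝ (b '' (U : Set ι))), ∀ e ∉ U, b.coord e y = 0 := by
    intro y hy e he
    rw [affineSpan_convexHull] at hy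
    refine affineSpan_induction (p := fun y => b.coord e y = 0) hy ?_ ?_
    · rintro x ⟨i, hi, rfl⟩
      apply b.coord_apply_ne
      rintro rfl
      exact he hi
    · intro c u v w hu hv hw
      have h := (b.coord e).map_vadd w (c • (u - v))
      have h' := (b.coord e).linearMap_vsub u v
      simp only [vadd_eq_add, vsub_eq_sub, map_smul] at h h' ⊢
      rw [h, h', hu, hv, hw]; simp
  rw [mem_intrinsicInterior]
  refine ⟨⟨_, hspan⟩, ?_, rfl⟩
  rw [mem_interior]
  refine ⟨{y | ∀ i ∈ U, 0 < b.coord i y}, ?_, ?_, ?_⟩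
  · intro y hy
    have h1 := b.linear_combination_coord_eq_self (y : E)
    have h2 := b.sum_coord_apply_eq_one (y : E)
    have hz' := hz y y.2
    rw [← Finset.sum_subset (Finset.subset_univ U)] at h1 h2
    · show (y : E) ∈ convexHull ℝ (b '' (U : Set ι))
      rw [← h1]
      exact (convex_convexHull ℝ _).sum_mem (fun i hi => (hy i hi).le) h2
        (fun i hi => subset_convexHull ℝ _ ⟨i, hi, rfl⟩)
    · intro i _ hi; exact hz' i hi
    · intro i _ hi; simp [hz' i hi]
  · have : {y : affineSpan ℝ (convexHull ℝ (b '' (U : Set ι))) | ∀ i ∈ U, 0 < b.coord i y}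
        = ⋂ i ∈ U, {y : affineSpan ℝ (convexHull ℝ (b '' (U : Set ι))) | 0 < b.coord i y} := by
      ext; simp
    rw [this]
    refine isOpen_biInter_finset fun i _ => ?_
    exact isOpen_lt continuous_const
      ((continuous_barycentric_coord b i).comp continuous_subtype_val)
  · intro i hi
    have := b.coord_apply_combination_of_mem hi hs
    rw [Finset.affineCombination_eq_linear_combination _ _ _ hs] at this
    show 0 < b.coord i (∑ i ∈ U, w i • b i)
    rw [this]; exact hw i hi

section
variable {d n : ℕ} {v : Fin n → EuclideanSpace ℝ (Fin d)}

lemma exists_basis (hgen : ∀ s : Finset (Fin n), s.card = d + 1 →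
      AffineIndependent ℝ (fun i : s => v i.1)) (S : Finset (Fin n)) (hS : S.card = d + 1) :
    ∃ b : AffineBasis S ℝ (EuclideanSpace ℝ (Fin d)), ∀ i : S, b i = v i := by
  refine ⟨⟨fun i => v i.1, hgen S hS, ?_⟩, fun i => rfl⟩
  rw [(hgen S hS).affineSpan_eq_top_iff_card_eq_finrank_add_one]
  simp [hS]

lemma relint (hn : d + 1 ≤ n) (hgen : ∀ s : Finset (Fin n), s.card = d + 1 →
      AffineIndependent ℝ (fun i : s => v i.1)) (U : Finset (Fin n)) (hU : U.card = d)
    (w : Fin n → ℝ)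
    (hw : ∀ i ∈ U, 0 < w i) (hs : ∑ i ∈ U, w i = 1) :
    ∑ i ∈ U, w i • v i ∈ intrinsicInterior ℝ (convexHull ℝ (v '' (U : Set (Fin n)))) := by
  obtain ⟨S, hUS, hS⟩ := Finset.exists_superset_card_eq (s := U) (n := d + 1) (by omega) (by simpa)
  obtain ⟨b, hb⟩ := exists_basis hgen S hS
  have h := relint_aux b (U.subtype (· ∈ S)) (fun i => w i) (by
    intro i hi; exact hw i (by simpa using hi)) (by
    rw [Finset.sum_subtype_of_mem w (fun x hx => hUS hx), hs])
  have e1 : ∑ i ∈ U.subtype (· ∈ S), w i • b i = ∑ i ∈ U, w i • v i := by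
    simp_rw [hb]
    exact Finset.sum_subtype_of_mem (fun i => w i • v i) (fun x hx => hUS hx)
  have e2 : b '' ((U.subtype (· ∈ S) : Finset S) : Set S) = v '' (U : Set (Fin n)) := by
    ext x
    constructor
    · rintro ⟨i, hi, rfl⟩
      exact ⟨i, by simpa using hi, (hb i).symm⟩
    · rintro ⟨i, hi, rfl⟩
      exact ⟨⟨i, hUS hi⟩, by simpa using hi, hb _⟩
  rwa [e1, e2] at h

lemma exists_coord (hgen : ∀ s : Finset (Fin n), s.card = d + 1 →
      AffineIndependent ℝ (fun i : s => v i.1)) (S : Finset (Fin n)) (hS : S.card = d + 1) :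
    ∃ A : Fin n → Fin n → ℝ, (∀ j, ∀ i ∉ S, A j i = 0) ∧ (∀ j, ∑ i, A j i = 1) ∧
      ∀ j, ∑ i, A j i • v i = v j := by
  obtain ⟨b, hb⟩ := exists_basis hgen S hS
  refine ⟨fun j i => if h : i ∈ S then b.coord ⟨i, h⟩ (v j) else 0, ?_, ?_, ?_⟩
  · intro j i hi; simp [hi]
  · intro j
    rw [← b.sum_coord_apply_eq_one (v j), ← Finset.sum_subset (Finset.subset_univ S),
      ← Finset.sum_coe_sort S]
    · simp
    · intro i _ hi; simp [hi]
  · intro j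
    conv_rhs => rw [← b.linear_combination_coord_eq_self (v j)]
    rw [← Finset.sum_subset (Finset.subset_univ S), ← Finset.sum_coe_sort S]
    · simp [hb]
    · intro i _ hi; simp [hi]

/-- correction of a vector to an affine dependency -/
lemma exists_corr (hgen : ∀ s : Finset (Fin n), s.card = d + 1 →
      AffineIndependent ℝ (fun i : s => v i.1)) (S : Finset (Fin n)) (hS : S.card = d + 1) :
    ∃ C : (Fin n → ℝ) →ₗ[ℝ] (Fin n → ℝ), (∀ δ, ∀ i ∉ S, C δ i = δ i) ∧ (∀ δ, ∑ i, C δ i = 0) ∧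
      ∀ δ, ∑ i, C δ i • v i = 0 := by
  obtain ⟨A, h1, h2, h3⟩ := exists_coord hgen S hS
  refine ⟨LinearMap.id - Matrix.toLin' (Matrix.of fun i j => A j i), ?_, ?_, ?_⟩
  · intro δ i hi
    simp [Matrix.mulVec, dotProduct, h1 _ i hi]
  · intro δ
    simp only [LinearMap.sub_apply, LinearMap.id_apply, Pi.sub_apply, Matrix.toLin'_apply,
      Matrix.mulVec, dotProduct, Matrix.of_apply, Finset.sum_sub_distrib]
    rw [Finset.sum_comm]
    simp [← Finset.sum_mul, h2]
  · intro δ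
    simp only [LinearMap.sub_apply, LinearMap.id_apply, Pi.sub_apply, Matrix.toLin'_apply,
      Matrix.mulVec, dotProduct, Matrix.of_apply, sub_smul, Finset.sum_sub_distrib,
      Finset.sum_smul]
    rw [Finset.sum_comm]
    simp_rw [mul_comm (A _ _), mul_smul, ← Finset.smul_sum, h3]
    simp

lemma dep_zero (hn : d + 1 ≤ n) (hgen : ∀ s : Finset (Fin n), s.card = d + 1 →
      AffineIndependent ℝ (fun i : s => v i.1)) (l : Fin n → ℝ) (h0 : ∑ i, l i = 0)
    (h1 : ∑ i, l i • v i = 0) (T : Finset (Fin n)) (hT : T.card ≤ d + 1)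
    (hl : ∀ i ∉ T, l i = 0) : l = 0 := by
  obtain ⟨S, hTS, hS⟩ := Finset.exists_superset_card_eq (s := T) (n := d + 1) hT (by simpa)
  have hl' : ∀ i ∉ S, l i = 0 := fun i hi => hl i (fun h => hi (hTS h))
  have h := affineIndependent_iff.1 (hgen S hS) Finset.univ (fun i => l i)
    (by
      rw [Finset.sum_coe_sort S l, ← h0]
      exact Finset.sum_subset (Finset.subset_univ S) (fun i _ hi => hl' i hi))
    (by
      rw [Finset.sum_coe_sort S (fun i => l i • v i), ← h1]
      exact Finset.sum_subset (Finset.subset_univ S) (fun i _ hi => by simp [hl' i hi]))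
  ext i
  by_cases hi : i ∈ S
  · exact h ⟨i, hi⟩ (Finset.mem_univ _)
  · exact hl' i hi

/-- From a weakly signed dependency to a crossing -/
lemma crossing (hn : d + 1 ≤ n) (hd : 0 < d) (hgen : ∀ s : Finset (Fin n), s.card = d + 1 →
      AffineIndependent ℝ (fun i : s => v i.1)) (l : Fin n → ℝ) (hne : l ≠ 0) (h0 : ∑ i, l i = 0)
    (h1 : ∑ i, l i • v i = 0) (U W : Finset (Fin n)) (hUW : Disjoint U W)
    (hU : U.card = d) (hW : W.card = d) (hlU : ∀ i ∈ U, 0 ≤ l i) (hlW : ∀ i ∈ W, l i ≤ 0)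
    (hl : ∀ i, i ∉ U → i ∉ W → l i = 0) :
    (intrinsicInterior ℝ (convexHull ℝ (v '' (U : Set (Fin n)))) ∩
        intrinsicInterior ℝ (convexHull ℝ (v '' (W : Set (Fin n))))).Nonempty := by
  have hT : d + 1 ≤ (Finset.univ.filter fun i => l i ≠ 0).card := by
    by_contra hcon
    exact hne (dep_zero hn hgen l h0 h1 (Finset.univ.filter fun i => l i ≠ 0) (by omega) (by simp))
  obtain ⟨S, hST, hS⟩ := Finset.exists_subset_card_eq hT
  have hSl : ∀ i ∈ S, l i ≠ 0 := fun i hi => by simpa using hST hi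
  obtain ⟨C, c1, c2, c3⟩ := exists_corr hgen S hS
  set δ : Fin n → ℝ := fun i => if i ∈ U then 1 else if i ∈ W then -1 else 0 with hδ
  have key : ∀ i, ∀ᶠ ε in nhdsWithin (0 : ℝ) (Set.Ioi 0),
      (i ∈ U → 0 < l i + ε * C δ i) ∧ (i ∈ W → l i + ε * C δ i < 0) := by
    intro i
    have hcont : Filter.Tendsto (fun ε : ℝ => l i + ε * C δ i) (nhdsWithin (0 : ℝ) (Set.Ioi 0))
        (nhds (l i)) := by
      have : Continuous (fun ε : ℝ => l i + ε * C δ i) := by fun_prop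
      have h := this.tendsto 0
      simp only [zero_mul, add_zero] at h
      exact h.mono_left nhdsWithin_le_nhds
    by_cases hli : l i = 0
    · have hiS : i ∉ S := fun h => hSl i h hli
      filter_upwards [self_mem_nhdsWithin] with ε hε
      have hε : 0 < ε := hε
      rw [c1 δ i hiS, hli]
      constructor
      · intro hi; simp [hδ, hi, hε]
      · intro hi
        have : i ∉ U := fun h => Finset.disjoint_left.1 hUW h hi
        simp [hδ, hi, hε, this]
    · rcases lt_or_gt_of_ne hli with hlt | hgt
      · filter_upwards [hcont.eventually_lt_const hlt] with ε hε
        exact ⟨fun hi => absurd (hlU i hi) (not_le.2 hlt), fun _ => hε⟩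
      · filter_upwards [hcont.eventually_const_lt hgt] with ε hε
        exact ⟨fun _ => hε, fun hi => absurd (hlW i hi) (not_le.2 hgt)⟩
  obtain ⟨ε, hε⟩ := (Filter.eventually_all.2 key).exists
  set m : Fin n → ℝ := fun i => l i + ε * C δ i with hm
  have m0 : ∑ i, m i = 0 := by
    simp [hm, Finset.sum_add_distrib, ← Finset.mul_sum, h0, c2]
  have m1 : ∑ i, m i • v i = 0 := by
    simp [hm, Finset.sum_add_distrib, add_smul, mul_smul, ← Finset.smul_sum, h1, c3]
  have mz : ∀ i, i ∉ U ∪ W → m i = 0 := by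
    intro i hi
    rw [Finset.mem_union, not_or] at hi
    have hli := hl i hi.1 hi.2
    have hiS : i ∉ S := fun h => hSl i h hli
    have hδi : δ i = 0 := by simp [hδ, hi.1, hi.2]
    show l i + ε * C δ i = 0
    rw [hli, c1 δ i hiS, hδi]; simp
  rw [← Finset.sum_subset (Finset.subset_univ (U ∪ W)) (fun i _ hi => mz i hi),
    Finset.sum_union hUW] at m0
  rw [← Finset.sum_subset (Finset.subset_univ (U ∪ W)) (fun i _ hi => by simp [mz i hi]),
    Finset.sum_union hUW] at m1
  have hUne : U.Nonempty := Finset.card_pos.1 (by omega)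
  have hpos : 0 < ∑ i ∈ U, m i := Finset.sum_pos (fun i hi => (hε i).1 hi) hUne
  set s := ∑ i ∈ U, m i with hs
  have hsW : ∑ i ∈ W, m i = - s := by linarith
  refine ⟨∑ i ∈ U, (m i / s) • v i, relint hn hgen U hU _ ?_ ?_, ?_⟩
  · intro i hi; exact div_pos ((hε i).1 hi) hpos
  · rw [← Finset.sum_div, ← hs, div_self hpos.ne']
  · have : ∑ i ∈ U, (m i / s) • v i = ∑ i ∈ W, (- m i / s) • v i := by
      simp only [div_eq_inv_mul, mul_smul, ← Finset.smul_sum, neg_smul, Finset.sum_neg_distrib]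
      congr 1
      exact eq_neg_of_add_eq_zero_left m1
    rw [this]
    refine relint hn hgen W hW _ ?_ ?_
    · intro i hi
      exact div_pos (neg_pos.2 ((hε i).2 hi)) hpos
    · rw [← Finset.sum_div, Finset.sum_neg_distrib, hsW, neg_neg, div_self hpos.ne']
end

/-- the median of three real numbers -/
noncomputable def med (x y z : ℝ) : ℝ := max (min x y) (min (max x y) z)

lemma med_neg (x y z : ℝ) : med (-x) (-y) (-z) = - med x y z := by
  unfold med
  rw [min_neg_neg, max_neg_neg, min_neg_neg, max_neg_neg, neg_inj]
  rcases le_total x y with h | h <;> rcases le_total x z with h1 | h1 <;>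
    rcases le_total y z with h2 | h2 <;> simp [h, h1, h2] <;> linarith

lemma med_sub (x y z : ℝ) :
    med (x - med x y z) (y - med x y z) (z - med x y z) = 0 := by
  have h : ∀ c, med (x - c) (y - c) (z - c) = med x y z - c := by
    intro c
    unfold med
    simp only [min_sub_sub_right, max_sub_sub_right]
  rw [h, sub_self]

lemma med_pattern {ι : Type*} (l : ι → ℝ) (a b c : ι) (hab : a ≠ b) (hac : a ≠ c) (hbc : b ≠ c)
    (h : med (l a) (l b) (l c) = 0) :
    ∃ p q, p ≠ q ∧ (p = a ∨ p = b ∨ p = c) ∧ (q = a ∨ q = b ∨ q = c) ∧ 0 ≤ l p ∧ l q ≤ 0 ∧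
      ∀ j, (j = a ∨ j = b ∨ j = c) → j ≠ p → j ≠ q → l j = 0 := by
  have h' : (l a = 0 ∧ (0 ≤ l b ∧ l c ≤ 0 ∨ 0 ≤ l c ∧ l b ≤ 0)) ∨
      (l b = 0 ∧ (0 ≤ l a ∧ l c ≤ 0 ∨ 0 ≤ l c ∧ l a ≤ 0)) ∨
      (l c = 0 ∧ (0 ≤ l b ∧ l a ≤ 0 ∨ 0 ≤ l a ∧ l b ≤ 0)) := by
    unfold med at h
    rcases le_total (l a) (l b) with h1 | h1 <;> rcases le_total (l a) (l c) with h2 | h2 <;>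
      rcases le_total (l b) (l c) with h3 | h3 <;> simp [h1, h2, h3] at h <;>
      first
      | exact Or.inl ⟨h, Or.inl ⟨by linarith, by linarith⟩⟩
      | exact Or.inl ⟨h, Or.inr ⟨by linarith, by linarith⟩⟩
      | exact Or.inr (Or.inl ⟨h, Or.inl ⟨by linarith, by linarith⟩⟩)
      | exact Or.inr (Or.inl ⟨h, Or.inr ⟨by linarith, by linarith⟩⟩)
      | exact Or.inr (Or.inr ⟨h, Or.inl ⟨by linarith, by linarith⟩⟩)
      | exact Or.inr (Or.inr ⟨h, Or.inr ⟨by linarith, by linarith⟩⟩)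
  rcases h' with ⟨h0, ⟨h1, h2⟩ | ⟨h1, h2⟩⟩ | ⟨h0, ⟨h1, h2⟩ | ⟨h1, h2⟩⟩ |
    ⟨h0, ⟨h1, h2⟩ | ⟨h1, h2⟩⟩
  · exact ⟨b, c, by tauto, by tauto, by tauto, h1, h2, by
      rintro j (rfl | rfl | rfl) <;> tauto⟩
  · exact ⟨c, b, by tauto, by tauto, by tauto, h1, h2, by
      rintro j (rfl | rfl | rfl) <;> tauto⟩
  · exact ⟨a, c, by tauto, by tauto, by tauto, h1, h2, by
      rintro j (rfl | rfl | rfl) <;> tauto⟩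
  · exact ⟨c, a, by tauto, by tauto, by tauto, h1, h2, by
      rintro j (rfl | rfl | rfl) <;> tauto⟩
  · exact ⟨b, a, by tauto, by tauto, by tauto, h1, h2, by
      rintro j (rfl | rfl | rfl) <;> tauto⟩
  · exact ⟨a, b, by tauto, by tauto, by tauto, h1, h2, by
      rintro j (rfl | rfl | rfl) <;> tauto⟩

/-- the loop of sign vectors on the second part -/
noncomputable def loop (n : ℕ) (t : ℝ) : Fin n → ℝ := fun i =>
  if i.val = 3 then Real.cos t - med (Real.cos t) (Real.sin t) 0
  else if i.val = 4 then Real.sin t - med (Real.cos t) (Real.sin t) 0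
  else if i.val = 5 then 0 - med (Real.cos t) (Real.sin t) 0
  else 0

lemma continuous_med {X : Type*} [TopologicalSpace X] {f g h : X → ℝ} (hf : Continuous f)
    (hg : Continuous g) (hh : Continuous h) : Continuous fun x => med (f x) (g x) (h x) := by
  unfold med
  fun_prop

lemma continuous_loop (n : ℕ) : Continuous (loop n) := by
  have h := continuous_med Real.continuous_cos Real.continuous_sin (continuous_const (y := (0 : ℝ)))
  refine continuous_pi fun i => ?_
  unfold loop
  split_ifs
  · exact Real.continuous_cos.sub h
  · exact Real.continuous_sin.sub h
  · exact continuous_const.sub h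
  · exact continuous_const

lemma loop_pi (n : ℕ) : loop n Real.pi = - loop n 0 := by
  ext i
  simp only [loop, Pi.neg_apply, Real.cos_pi, Real.sin_pi, Real.cos_zero, Real.sin_zero]
  have h1 : med (-1) 0 0 = 0 := by unfold med; norm_num
  have h2 : med 1 0 0 = 0 := by unfold med; norm_num
  rw [h1, h2]
  split_ifs <;> norm_num

lemma exists_dep (d : ℕ) (hd : 3 ≤ d) (v : Fin (2 * d + 2) → EuclideanSpace ℝ (Fin d))
    (hgen : ∀ s : Finset (Fin (2 * d + 2)), s.card = d + 1 →
      AffineIndependent ℝ (fun i : s => v i.1)) :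
    ∃ l : Fin (2 * d + 2) → ℝ, l ≠ 0 ∧ ∑ i, l i = 0 ∧ ∑ i, l i • v i = 0 ∧
      med (l ⟨0, by omega⟩) (l ⟨1, by omega⟩) (l ⟨2, by omega⟩) = 0 ∧
      med (l ⟨3, by omega⟩) (l ⟨4, by omega⟩) (l ⟨5, by omega⟩) = 0 ∧
      ∀ i : Fin (2 * d + 2), 6 ≤ i.val → i.val % 2 = 1 → l i = 0 := by
  let g : Fin (d + 1) → Fin (2 * d + 2) := fun k =>
    if k.val < 3 then ⟨k.val, by omega⟩ else ⟨2 * k.val, by omega⟩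
  have hg : Function.Injective g := by
    intro a b hab
    simp only [g] at hab
    ext
    split_ifs at hab <;> simp only [Fin.mk.injEq] at hab <;> omega
  let S : Finset (Fin (2 * d + 2)) := Finset.univ.image g
  have hS : S.card = d + 1 := by
    rw [Finset.card_image_of_injective _ hg]; simp
  have hnS : ∀ i : Fin (2 * d + 2), 3 ≤ i.val → (i.val < 6 ∨ i.val % 2 = 1) → i ∉ S := by
    intro i h3 h6 hi
    obtain ⟨k, -, rfl⟩ := Finset.mem_image.1 hi
    simp only [g] at h3 h6
    split_ifs at h3 h6 <;> simp only at h3 h6 <;> omega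
  obtain ⟨C, c1, c2, c3⟩ := exists_corr hgen S hS
  have hC : Continuous C := C.continuous_of_finiteDimensional
  let L : ℝ → Fin (2 * d + 2) → ℝ := fun t => C (loop _ t)
  have hL : Continuous L := hC.comp (continuous_loop _)
  have hLi : ∀ i, Continuous fun t => L t i := fun i => (continuous_apply i).comp hL
  let f : ℝ → ℝ := fun t =>
    med (L t ⟨0, by omega⟩) (L t ⟨1, by omega⟩) (L t ⟨2, by omega⟩)
  have hf : Continuous f := continuous_med (hLi _) (hLi _) (hLi _)
  have hpi : f Real.pi = - f 0 := by
    simp only [f, L, loop_pi, map_neg, Pi.neg_apply, med_neg]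
  obtain ⟨t, ht⟩ : (0 : ℝ) ∈ Set.range f := by
    rcases le_total (f 0) 0 with h | h
    · exact mem_range_of_exists_le_of_exists_ge hf ⟨0, h⟩ ⟨Real.pi, by linarith⟩
    · exact mem_range_of_exists_le_of_exists_ge hf ⟨Real.pi, by linarith⟩ ⟨0, h⟩
  have e3 : L t ⟨3, by omega⟩ = Real.cos t - med (Real.cos t) (Real.sin t) 0 := by
    simp only [L]; rw [c1 _ _ (hnS _ (by simp) (by simp))]; simp [loop]
  have e4 : L t ⟨4, by omega⟩ = Real.sin t - med (Real.cos t) (Real.sin t) 0 := by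
    simp only [L]; rw [c1 _ _ (hnS _ (by simp) (by simp))]; simp [loop]
  have e5 : L t ⟨5, by omega⟩ = 0 - med (Real.cos t) (Real.sin t) 0 := by
    simp only [L]; rw [c1 _ _ (hnS _ (by simp) (by simp))]; simp [loop]
  refine ⟨L t, ?_, c2 _, c3 _, ht, ?_, ?_⟩
  · intro h
    rw [h] at e3 e4 e5
    simp only [Pi.zero_apply] at e3 e4 e5
    have h1 : Real.cos t = 0 := by linarith
    have h2 : Real.sin t = 0 := by linarith
    have := Real.sin_sq_add_cos_sq t
    rw [h1, h2] at this
    norm_num at this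
  · rw [e3, e4, e5]; exact med_sub _ _ _
  · intro i h6 hi
    simp only [L]
    rw [c1 _ _ (hnS i (by omega) (Or.inr hi))]
    simp only [loop]
    rw [if_neg (by omega), if_neg (by omega), if_neg (by omega)]

lemma part_card {d n : ℕ} (p : Fin d → Fin n) (hp : ∀ i, partIdx (p i).val = i.val) :
    (Finset.univ.image p).card = d ∧
    ∀ i < d, ((Finset.univ.image p).filter fun j => partIdx j.val = i).card = 1 := by
  constructor
  · rw [Finset.card_image_of_injective]
    · simp
    · intro a b hab
      ext
      rw [← hp a, ← hp b, hab]
  · intro i hi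
    rw [Finset.card_eq_one]
    refine ⟨p ⟨i, hi⟩, ?_⟩
    ext j
    simp only [Finset.mem_filter, Finset.mem_image, Finset.mem_univ, true_and,
      Finset.mem_singleton]
    constructor
    · rintro ⟨⟨k, rfl⟩, hk⟩
      congr 1
      ext
      rw [← hp k, hk]
    · rintro rfl
      exact ⟨⟨_, rfl⟩, hp _⟩

/-- Let `d ≥ 3` and let `v_1, …, v_{2d+2}` be points in general position
in `ℝ^d` partitioned into parts `L_1 = {v_1,v_2,v_3}`, `L_2 = {v_4,v_5,v_6}` and
`L_k = {v_{2k+1}, v_{2k+2}}` for `3 ≤ k ≤ d`. Then there exist disjoint sets `U', W'` of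
`d` vertices each, containing exactly one vertex of every part, whose convex hulls share
a common point of their relative (intrinsic) interiors: every `d`-dimensional rectilinear
drawing of `K_{2×3+(d-2)×2}^d` contains a crossing pair of hyperedges. -/
theorem exists_crossing_pair (d : ℕ) (hd : 3 ≤ d)
    (v : Fin (2 * d + 2) → EuclideanSpace ℝ (Fin d))
    (hinj : Function.Injective v)
    (hgen : ∀ s : Finset (Fin (2 * d + 2)), s.card = d + 1 →
      AffineIndependent ℝ (fun i : s => v i.1)) :
    ∃ U' W' : Finset (Fin (2 * d + 2)), Disjoint U' W' ∧
      U'.card = d ∧ W'.card = d ∧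
      (∀ i < d, (U'.filter fun j => partIdx j.val = i).card = 1) ∧
      (∀ i < d, (W'.filter fun j => partIdx j.val = i).card = 1) ∧
      (intrinsicInterior ℝ (convexHull ℝ (v '' (U' : Set (Fin (2 * d + 2))))) ∩
        intrinsicInterior ℝ
          (convexHull ℝ (v '' (W' : Set (Fin (2 * d + 2)))))).Nonempty := by
  obtain ⟨l, hne, h0, h1, hA, hB, hO⟩ := exists_dep d hd v hgen
  have key : ∀ i : Fin d, ∃ p q : Fin (2 * d + 2), p ≠ q ∧ partIdx p.val = i.val ∧
      partIdx q.val = i.val ∧ 0 ≤ l p ∧ l q ≤ 0 ∧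
      ∀ j : Fin (2 * d + 2), partIdx j.val = i.val → j ≠ p → j ≠ q → l j = 0 := by
    intro i
    rcases Nat.lt_or_ge i.val 2 with hi | hi
    · rcases (by omega : i.val = 0 ∨ i.val = 1) with hi | hi
      · obtain ⟨p, q, hpq, hp, hq, hlp, hlq, hj⟩ :=
          med_pattern l _ _ _ (by simp) (by simp) (by simp) hA
        refine ⟨p, q, hpq, ?_, ?_, hlp, hlq, ?_⟩
        · rcases hp with rfl | rfl | rfl <;> simp [partIdx, hi]
        · rcases hq with rfl | rfl | rfl <;> simp [partIdx, hi]
        · intro j hji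
          apply hj
          simp only [Fin.ext_iff]
          unfold partIdx at hji
          split_ifs at hji <;> omega
      · obtain ⟨p, q, hpq, hp, hq, hlp, hlq, hj⟩ :=
          med_pattern l _ _ _ (by simp) (by simp) (by simp) hB
        refine ⟨p, q, hpq, ?_, ?_, hlp, hlq, ?_⟩
        · rcases hp with rfl | rfl | rfl <;> simp [partIdx, hi]
        · rcases hq with rfl | rfl | rfl <;> simp [partIdx, hi]
        · intro j hji
          apply hj
          simp only [Fin.ext_iff]
          unfold partIdx at hji
          split_ifs at hji <;> omega
    · have hb : l ⟨2 * i.val + 3, by omega⟩ = 0 := hO _ (by show 6 ≤ 2 * i.val + 3; omega)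
        (by show (2 * i.val + 3) % 2 = 1; omega)
      have pa : partIdx (2 * i.val + 2) = i.val := by
        unfold partIdx; split_ifs <;> omega
      have pb : partIdx (2 * i.val + 3) = i.val := by
        unfold partIdx; split_ifs <;> omega
      have hj : ∀ j : Fin (2 * d + 2), partIdx j.val = i.val →
          j.val = 2 * i.val + 2 ∨ j.val = 2 * i.val + 3 := by
        intro j hji
        unfold partIdx at hji
        split_ifs at hji <;> omega
      rcases le_total 0 (l ⟨2 * i.val + 2, by omega⟩) with h | h
      · refine ⟨⟨2 * i.val + 2, by omega⟩, ⟨2 * i.val + 3, by omega⟩, by simp, pa, pb, h,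
          hb.le, ?_⟩
        intro j hji hp hq
        simp only [ne_eq, Fin.ext_iff] at hp hq
        have := hj j hji
        omega
      · refine ⟨⟨2 * i.val + 3, by omega⟩, ⟨2 * i.val + 2, by omega⟩, by simp, pb, pa, hb.ge,
          h, ?_⟩
        intro j hji hp hq
        simp only [ne_eq, Fin.ext_iff] at hp hq
        have := hj j hji
        omega
  choose p q hpq hp hq hlp hlq hz using key
  have hdisj : Disjoint (Finset.univ.image p) (Finset.univ.image q) := by
    rw [Finset.disjoint_left]
    intro j hj1 hj2
    obtain ⟨a, -, rfl⟩ := Finset.mem_image.1 hj1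
    obtain ⟨b, -, hab⟩ := Finset.mem_image.1 hj2
    have : a = b := by
      ext
      rw [← hp a, ← hq b, hab]
    subst this
    exact hpq a hab.symm
  refine ⟨Finset.univ.image p, Finset.univ.image q, hdisj, (part_card p hp).1, (part_card q hq).1,
    (part_card p hp).2, (part_card q hq).2, ?_⟩
  refine crossing (by omega) (by omega) hgen l hne h0 h1 _ _ hdisj (part_card p hp).1
    (part_card q hq).1 ?_ ?_ ?_
  · intro j hj
    obtain ⟨a, -, rfl⟩ := Finset.mem_image.1 hj
    exact hlp a
  · intro j hj
    obtain ⟨a, -, rfl⟩ := Finset.mem_image.1 hj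
    exact hlq a
  · intro j hj1 hj2
    have hjd : partIdx j.val < d := by
      unfold partIdx
      split_ifs <;> omega
    refine hz ⟨_, hjd⟩ j rfl ?_ ?_
    · intro h
      exact hj1 (Finset.mem_image.2 ⟨_, Finset.mem_univ _, h.symm⟩)
    · intro h
      exact hj2 (Finset.mem_image.2 ⟨_, Finset.mem_univ _, h.symm⟩)
end

section
/- Let d ≥ 4 and let a set of 3(⌈d/2⌉+1) + 2(⌊d/2⌋-1) points in general position in ℝ^d (every d+1 of them affinely independent) be partitioned into d parts, where each of the first ⌈d/2⌉+1 parts has 3 points and each of the remaining ⌊d/2⌋-1 parts has 2 points. Then the number of unordered pairs {U', W'} of disjoint d-element subsets, each containing exactly one point from every part, such that the convex hulls of U' and W' contain a common point in their relative (intrinsic) interiors, is at least 2^(⌊d/2⌋-1). Equivalently, every d-dimensional rectilinear drawing of K_{(⌈d/2⌉+1)×3+(⌊d/2⌋-1)×2}^d contains at least 2^(⌊d/2⌋-1) crossing pairs of hyperedges. -/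
namespace CrossTv

theorem exists_weights {E : Type*} [AddCommGroup E] [Module ℝ E] {ι : Type*} [Fintype ι]
    (p : ι → E) (x : E) (hx : x ∈ convexHull ℝ (Set.range p)) :
    ∃ w : ι → ℝ, (∀ i, 0 ≤ w i) ∧ ∑ i, w i = 1 ∧ ∑ i, w i • p i = x := by
  classical
  have h : convexHull ℝ (Set.range p) ⊆
      (Fintype.linearCombination ℝ p) '' (stdSimplex ℝ ι) := by
    apply convexHull_min
    · rintro _ ⟨i, rfl⟩
      exact ⟨Pi.single i 1, single_mem_stdSimplex ℝ i, by
        simp [Fintype.linearCombination_apply_single]⟩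
    · exact (convex_stdSimplex ℝ ι).linear_image _
  obtain ⟨w, hw, rfl⟩ := h hx
  exact ⟨w, hw.1, hw.2, rfl⟩

/-- A strictly positive convex combination lies in the relative interior. -/
theorem pos_comb_mem_intrinsicInterior {E : Type*} [NormedAddCommGroup E] [NormedSpace ℝ E]
    [FiniteDimensional ℝ E] {ι : Type*} [Fintype ι] [Nonempty ι]
    (p : ι → E) (w : ι → ℝ) (hw : ∀ i, 0 < w i) (h1 : ∑ i, w i = 1) :
    ∑ i, w i • p i ∈ intrinsicInterior ℝ (convexHull ℝ (Set.range p)) := by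
  set S := convexHull ℝ (Set.range p) with hS
  have hSne : S.Nonempty := (Set.range_nonempty p).convexHull
  obtain ⟨y, hy⟩ := hSne.intrinsicInterior (convex_convexHull ℝ _)
  have hyS : y ∈ S := intrinsicInterior_subset hy
  obtain ⟨u, hu0, hu1, huy⟩ := exists_weights p y hyS
  -- choose delta
  obtain ⟨δ, hδ0, hδ1, hδ⟩ : ∃ δ : ℝ, 0 < δ ∧ δ < 1 ∧ ∀ i, δ ≤ w i := by
    obtain ⟨i0, hi0⟩ := Finite.exists_min w
    refine ⟨min (w i0) (1/2), lt_min (hw i0) (by norm_num), ?_, fun i => ?_⟩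
    · exact (min_le_right _ _).trans_lt (by norm_num)
    · exact (min_le_left _ _).trans (hi0 i)
  have hule : ∀ i, u i ≤ 1 := fun i => by
    rw [← hu1]; exact Finset.single_le_sum (fun j _ => hu0 j) (Finset.mem_univ i)
  set q : E := ∑ i, ((w i - δ * u i) / (1 - δ)) • p i with hq
  have h1δ : 0 < 1 - δ := by linarith
  have hqS : q ∈ S := by
    refine mem_convexHull_of_exists_fintype (fun i => (w i - δ * u i) / (1 - δ)) p
      (fun i => ?_) ?_ (fun i => ⟨i, rfl⟩) rfl
    · apply div_nonneg _ h1δ.le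
      nlinarith [hule i, hδ i]
    · rw [← Finset.sum_div, Finset.sum_sub_distrib, ← Finset.mul_sum, h1, hu1]
      field_simp
  set z : E := ∑ i, w i • p i with hz
  have hzq : z = AffineMap.lineMap q y δ := by
    rw [AffineMap.lineMap_apply_module, hq, ← huy, Finset.smul_sum, Finset.smul_sum,
      ← Finset.sum_add_distrib, hz]
    refine Finset.sum_congr rfl fun i _ => ?_
    rw [smul_smul, smul_smul, ← add_smul]
    congr 1
    field_simp
    ring
  have hAq : q ∈ affineSpan ℝ S := subset_affineSpan ℝ _ hqS
  have hAy : y ∈ affineSpan ℝ S := subset_affineSpan ℝ _ hyS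
  have hAz : z ∈ affineSpan ℝ S := hzq ▸ AffineMap.lineMap_mem _ hAq hAy
  obtain ⟨y', hy', hyy⟩ := mem_intrinsicInterior.1 hy
  refine mem_intrinsicInterior.2 ⟨⟨z, hAz⟩, ?_, rfl⟩
  let g : affineSpan ℝ S → affineSpan ℝ S := fun x =>
    ⟨AffineMap.lineMap q (x : E) δ⁻¹, AffineMap.lineMap_mem _ hAq x.2⟩
  have hg : Continuous g := by
    apply Continuous.subtype_mk
    simp only [AffineMap.lineMap_apply_module]
    fun_prop
  have hinv : ∀ x : affineSpan ℝ S, (x : E) = AffineMap.lineMap q (g x : E) δ := by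
    intro x
    simp only [g, AffineMap.lineMap_apply_module, smul_add, smul_smul]
    rw [mul_inv_cancel₀ hδ0.ne', one_smul, ← add_assoc, ← add_smul]
    have : 1 - δ + δ * (1 - δ⁻¹) = 0 := by field_simp; ring
    rw [this]; simp
  have hgz : g ⟨z, hAz⟩ = y' := by
    apply Subtype.ext
    rw [hyy]
    simp only [g, hzq, AffineMap.lineMap_apply_module, smul_add, smul_smul]
    rw [inv_mul_cancel₀ hδ0.ne', one_smul, ← add_assoc, ← add_smul]
    have : 1 - δ⁻¹ + δ⁻¹ * (1 - δ) = 0 := by field_simp; ring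
    rw [this]; simp
  rw [mem_interior_iff_mem_nhds] at hy' ⊢
  have := hg.continuousAt (x := ⟨z, hAz⟩)
  rw [← hgz] at hy'
  filter_upwards [this hy'] with x hx
  have hx' : (g x : E) ∈ S := hx
  show (x : E) ∈ S
  rw [hinv x]
  exact (convex_convexHull ℝ _).lineMap_mem hqS hx' ⟨hδ0.le, hδ1.le⟩

/-- The at most two edges lemma for two dimensional cones:
for `N+2` vectors in general position in an `N`-dimensional space the number of
positively dependent subfamilies of size `N+1` is even. -/
theorem even_card_posdep {V : Type*} [AddCommGroup V] [Module ℝ V] [FiniteDimensional ℝ V]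
    {J : Type*} [Fintype J] [DecidableEq J] (a : J → V)
    (hcard : Fintype.card J = Module.finrank ℝ V + 2)
    (hgen : ∀ x : J → ℝ, ∑ j, x j • a j = 0 → ∀ i j, i ≠ j → x i = 0 → x j = 0 → x = 0) 
    (Z : Finset J)
    (hZ : ∀ j, j ∈ Z ↔ ∃ x : J → ℝ, ∑ i, x i • a i = 0 ∧ x j = 0 ∧ ∀ i, i ≠ j → 0 < x i) :
    Even Z.card := by
  classical
  have hle : Z.card ≤ 2 := by
    by_contra hcon
    obtain ⟨j1, j2, j3, h1, h2, h3, h12, h13, h23⟩ := Finset.two_lt_card_iff.1 (not_le.1 hcon)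
    obtain ⟨x, hx, hx0, hxp⟩ := (hZ _).1 h1
    obtain ⟨y, hy, hy0, hyp⟩ := (hZ _).1 h2
    obtain ⟨z, hz, hz0, hzp⟩ := (hZ _).1 h3
    -- z = α x + β y
    have hx2 := hxp j2 h12.symm
    have hy1 := hyp j1 h12
    set α := z j2 / x j2
    set β := z j1 / y j1
    have hα : 0 < α := div_pos (hzp _ h23) hx2
    have hβ : 0 < β := div_pos (hzp _ h13) hy1
    have : (z - α • x - β • y) = 0 := by
      apply hgen _ _ j1 j2 h12
      · simp only [Pi.sub_apply, Pi.smul_apply, hx0, smul_eq_mul, β]; field_simp; ring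
      · simp only [Pi.sub_apply, Pi.smul_apply, hy0, smul_eq_mul, α]; field_simp; ring
      · simp only [Pi.sub_apply, Pi.smul_apply, sub_smul, Finset.sum_sub_distrib, hz, smul_assoc,
          ← Finset.smul_sum, hx, hy]; simp
    have h := congrFun this j3
    simp only [Pi.sub_apply, Pi.smul_apply, hz0, smul_eq_mul, Pi.zero_apply] at h
    have := mul_pos hα (hxp j3 h13.symm)
    have := mul_pos hβ (hyp j3 h23.symm)
    linarith
  have hne : Z.card ≠ 1 := by
    intro hcon
    obtain ⟨j, hj⟩ := Finset.card_eq_one.1 hcon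
    obtain ⟨x, hx, hx0, hxp⟩ := (hZ j).1 (by simp [hj])
    -- a second kernel vector with `u j > 0`
    obtain ⟨u, hu, huj⟩ : ∃ u : J → ℝ, ∑ i, u i • a i = 0 ∧ 0 < u j := by
      by_contra hno
      push Not at hno
      have hzero : ∀ u : J → ℝ, ∑ i, u i • a i = 0 → u j = 0 := by
        intro u hu
        apply le_antisymm (hno u hu)
        have := hno (-u) (by simp [hu])
        simpa using this
      have hcardpos : 1 < Fintype.card J := by omega
      obtain ⟨k, hk⟩ := Fintype.exists_ne_of_one_lt_card hcardpos j
      let f : (J → ℝ) →ₗ[ℝ] V × ℝ := (Fintype.linearCombination ℝ a).prod (LinearMap.proj k)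
      have hf : Function.Injective f := by
        rw [← LinearMap.ker_eq_bot, LinearMap.ker_eq_bot']
        intro m hm
        have h1 : ∑ i, m i • a i = 0 := by
          simpa [f, Fintype.linearCombination_apply] using congrArg Prod.fst hm
        have h2 : m k = 0 := by simpa [f] using congrArg Prod.snd hm
        exact hgen m h1 k j hk h2 (hzero m h1)
      have := LinearMap.finrank_le_finrank_of_injective hf
      simp at this
      omega
    have hcardpos : 1 < Fintype.card J := by omega
    obtain ⟨k0, hk0⟩ := Fintype.exists_ne_of_one_lt_card hcardpos j
    obtain ⟨k, hk, hmin⟩ := Finset.exists_min_image (Finset.univ.erase j) (fun i => u i / x i)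
      ⟨k0, by simp [hk0]⟩
    have hkj : k ≠ j := by simpa using hk
    set s := u k / x k
    let w : J → ℝ := u - s • x
    have hw : ∑ i, w i • a i = 0 := by
      simp only [w, Pi.sub_apply, Pi.smul_apply, sub_smul, Finset.sum_sub_distrib, smul_assoc,
          ← Finset.smul_sum, hx, hu]; simp
    have hwk : w k = 0 := by
      have := (hxp k hkj).ne'
      simp only [w, Pi.sub_apply, Pi.smul_apply, smul_eq_mul, s]; field_simp; ring
    have hwj : 0 < w j := by simpa [w, hx0] using huj
    have hwn : ∀ i, 0 ≤ w i := by
      intro i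
      by_cases hij : i = j
      · rw [hij]; exact hwj.le
      · have := hmin i (by simp [hij])
        rw [le_div_iff₀ (hxp i hij)] at this
        simp only [w, Pi.sub_apply, Pi.smul_apply, smul_eq_mul]
        linarith
    have hkZ : k ∈ Z := by
      rw [hZ]
      refine ⟨w, hw, hwk, fun i hi => lt_of_le_of_ne (hwn i) fun h0 => ?_⟩
      have := hgen w hw k i hi.symm hwk h0.symm
      rw [this] at hwj
      simp at hwj
    rw [hj] at hkZ
    exact hkj (by simpa using hkZ)
  interval_cases h : Z.card
  · exact ⟨0, rfl⟩
  · exact absurd rfl hne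
  · exact ⟨1, rfl⟩

/-- Edges of the hexagon: ordered pairs of distinct elements of `Fin 3`. -/
abbrev Edge := {p : Fin 3 × Fin 3 // p.1 ≠ p.2}

/-- Signed vectors of a facet of the join of hexagons. -/
def vert {ι V : Type*} [AddCommGroup V] (Y : ι → Fin 3 → V) (e : ι → Edge) (q : ι × Bool) : V :=
  if q.2 = true then Y q.1 (e q.1).1.1 else -(Y q.1 (e q.1).1.2)

/-- The facet is positively dependent. -/
def PosDep {ι V : Type*} [Fintype ι] [AddCommGroup V] [Module ℝ V]
    (Y : ι → Fin 3 → V) (e : ι → Edge) : Prop :=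
  ∃ x : ι × Bool → ℝ, (∀ q, 0 < x q) ∧ ∑ q, x q • vert Y e q = 0

def swapE (p : Edge) : Edge := ⟨(p.1.2, p.1.1), p.2.symm⟩

theorem flip_aux1 : ∀ p : Edge, -(p.1.1 + p.1.2) ≠ p.1.2 := by decide
theorem flip_aux2 : ∀ p : Edge, p.1.1 ≠ -(p.1.1 + p.1.2) := by decide

/-- Replace one vertex of the edge by the third element. -/
def flipE (s : Bool) (p : Edge) : Edge :=
  if s = true then ⟨(-(p.1.1 + p.1.2), p.1.2), flip_aux1 p⟩
  else ⟨(p.1.1, -(p.1.1 + p.1.2)), flip_aux2 p⟩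

theorem flipE_flipE : ∀ (s : Bool) (p : Edge), flipE s (flipE s p) = p := by decide
theorem flipE_ne : ∀ (s : Bool) (p : Edge), flipE s p ≠ p := by decide
theorem flipE_true_snd (p : Edge) : (flipE true p).1.2 = p.1.2 := rfl
theorem flipE_false_fst (p : Edge) : (flipE false p).1.1 = p.1.1 := rfl

/-- Flip in a facet. -/
def flipF {ι : Type*} [DecidableEq ι] (q : ι × Bool) (e : ι → Edge) : ι → Edge :=
  Function.update e q.1 (flipE q.2 (e q.1))

theorem flipF_flipF {ι : Type*} [DecidableEq ι] (q : ι × Bool) (e : ι → Edge) :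
    flipF q (flipF q e) = e := by
  simp [flipF, flipE_flipE]

theorem flipF_ne {ι : Type*} [DecidableEq ι] (q : ι × Bool) (e : ι → Edge) :
    flipF q e ≠ e := by
  intro h
  have := congrFun h q.1
  simp [flipF, flipE_ne] at this

theorem vert_flipF {ι V : Type*} [DecidableEq ι] [AddCommGroup V] (Y : ι → Fin 3 → V)
    (q r : ι × Bool) (e : ι → Edge) (hqr : r ≠ q) : vert Y (flipF q e) r = vert Y e r := by
  obtain ⟨i, s⟩ := q
  obtain ⟨j, t⟩ := r
  by_cases hij : j = i
  · subst hij
    have hst : t ≠ s := fun h => hqr (by rw [h])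
    cases s <;> cases t <;> simp_all [vert, flipF, flipE_true_snd, flipE_false_fst]
  · simp [vert, flipF, hij]

theorem posDep_swap {ι V : Type*} [Fintype ι] [AddCommGroup V] [Module ℝ V]
    (Y : ι → Fin 3 → V) (e : ι → Edge) (h : PosDep Y e) : PosDep Y (fun i => swapE (e i)) := by
  obtain ⟨x, hx, hs⟩ := h
  refine ⟨fun q => x (q.1, !q.2), fun q => hx _, ?_⟩
  rw [Fintype.sum_prod_type] at hs ⊢
  rw [← neg_eq_zero, ← Finset.sum_neg_distrib, ← hs]
  refine Finset.sum_congr rfl fun i _ => ?_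
  simp [vert, swapE]

open Classical in
/-- number of positively dependent facets -/
noncomputable def cnt {ι V : Type*} [Fintype ι] [DecidableEq ι] [AddCommGroup V] [Module ℝ V]
    (Y : ι → Fin 3 → V) : ℕ := (Finset.univ.filter fun e : ι → Edge => PosDep Y e).card

/-- replace the last point of part `i0` -/
def repl {ι V : Type*} [DecidableEq ι] (Y : ι → Fin 3 → V) (i0 : ι) (y : V) : ι → Fin 3 → V :=
  Function.update Y i0 (Function.update (Y i0) 2 y)

/-- extended family -/
def extFam {ι V : Type*} [AddCommGroup V] (Y : ι → Fin 3 → V) (e : ι → Edge) (y : V) :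
    Option (ι × Bool) → V
  | none => y
  | some q => vert Y e q

theorem vert_repl_of_ne {ι V : Type*} [DecidableEq ι] [AddCommGroup V] (Y : ι → Fin 3 → V)
    (i0 : ι) (y : V) (e : ι → Edge) (he : (e i0).1.1 = 2) (q : ι × Bool) (hq : q ≠ (i0, true)) :
    vert (repl Y i0 y) e q = vert Y e q := by
  obtain ⟨j, t⟩ := q
  by_cases hij : j = i0
  · subst hij
    cases t
    · have : (e j).1.2 ≠ 2 := fun h => (e j).2 (he.trans h.symm)
      simp [vert, repl, this]
    · exact absurd rfl hq
  · simp [vert, repl, hij]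

theorem vert_repl_self {ι V : Type*} [DecidableEq ι] [AddCommGroup V] (Y : ι → Fin 3 → V)
    (i0 : ι) (y : V) (e : ι → Edge) (he : (e i0).1.1 = 2) :
    vert (repl Y i0 y) e (i0, true) = y := by
  simp [vert, repl, he]

theorem vert_repl_other {ι V : Type*} [DecidableEq ι] [AddCommGroup V] (Y : ι → Fin 3 → V)
    (i0 : ι) (y : V) (e : ι → Edge) (h1 : (e i0).1.1 ≠ 2) (h2 : (e i0).1.2 ≠ 2) :
    vert (repl Y i0 y) e = vert Y e := by
  funext ⟨j, t⟩
  by_cases hij : j = i0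
  · subst hij
    simp [vert, repl, h1, h2]
  · simp [vert, repl, hij]

open Classical in
theorem cnt_split {ι V : Type*} [Fintype ι] [DecidableEq ι] [AddCommGroup V] [Module ℝ V]
    (Y : ι → Fin 3 → V) (i0 : ι) :
    cnt Y = 2 * (Finset.univ.filter fun e : ι → Edge => (e i0).1.1 = 2 ∧ PosDep Y e).card +
      (Finset.univ.filter fun e : ι → Edge =>
        ((e i0).1.1 ≠ 2 ∧ (e i0).1.2 ≠ 2) ∧ PosDep Y e).card := by
  have h1 : (Finset.univ.filter fun e : ι → Edge => (e i0).1.1 = 2 ∧ PosDep Y e).card =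
      (Finset.univ.filter fun e : ι → Edge => (e i0).1.2 = 2 ∧ PosDep Y e).card := by
    refine Finset.card_bij' (fun e _ i => swapE (e i)) (fun e _ i => swapE (e i)) ?_ ?_ ?_ ?_
    · intro e he
      simp only [Finset.mem_filter, Finset.mem_univ, true_and] at he ⊢
      exact ⟨he.1, posDep_swap _ _ he.2⟩
    · intro e he
      simp only [Finset.mem_filter, Finset.mem_univ, true_and] at he ⊢
      exact ⟨he.1, posDep_swap _ _ he.2⟩
    · intro e he; rfl
    · intro e he; rfl
  rw [two_mul]
  nth_rewrite 2 [h1]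
  rw [cnt, ← Finset.card_union_of_disjoint, ← Finset.card_union_of_disjoint]
  · congr 1
    ext e
    have := (e i0).2
    simp only [Finset.mem_filter, Finset.mem_univ, true_and, Finset.mem_union]
    tauto
  · rw [Finset.disjoint_left]
    intro e
    simp only [Finset.mem_filter, Finset.mem_univ, true_and, Finset.mem_union]
    tauto
  · rw [Finset.disjoint_left]
    intro e h1 h2
    simp only [Finset.mem_filter, Finset.mem_univ, true_and] at h1 h2
    exact (e i0).2 (h1.1.trans h2.1.symm)

/-- `o` is a missing index of a positive dependency of the extended family. -/
def Miss {ι V : Type*} [Fintype ι] [AddCommGroup V] [Module ℝ V] (Y : ι → Fin 3 → V)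
    (e : ι → Edge) (y : V) (o : Option (ι × Bool)) : Prop :=
  ∃ x : Option (ι × Bool) → ℝ, ∑ i, x i • extFam Y e y i = 0 ∧ x o = 0 ∧ ∀ i, i ≠ o → 0 < x i

theorem miss_none {ι V : Type*} [Fintype ι] [AddCommGroup V] [Module ℝ V] (Y : ι → Fin 3 → V)
    (e : ι → Edge) (y : V) : Miss Y e y none ↔ PosDep Y e := by
  constructor
  · rintro ⟨x, hs, h0, hp⟩
    refine ⟨fun q => x (some q), fun q => hp _ (by simp), ?_⟩
    rw [Fintype.sum_option, h0, zero_smul, zero_add] at hs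
    exact hs
  · rintro ⟨x, hp, hs⟩
    refine ⟨fun o => o.elim 0 x, ?_, rfl, ?_⟩
    · rw [Fintype.sum_option]
      simpa [extFam] using hs
    · rintro (_ | q) h
      · exact absurd rfl h
      · exact hp q

theorem miss_some {ι V : Type*} [Fintype ι] [DecidableEq ι] [AddCommGroup V] [Module ℝ V]
    (Y : ι → Fin 3 → V) (e : ι → Edge) (y : V) (i0 : ι) (he : (e i0).1.1 = 2) :
    Miss Y e y (some (i0, true)) ↔ PosDep (repl Y i0 y) e := by
  constructor
  · rintro ⟨x, hs, h0, hp⟩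
    refine ⟨fun q => if q = (i0, true) then x none else x (some q), fun q => ?_, ?_⟩
    · dsimp only
      split_ifs with h
      · exact hp _ (by simp)
      · exact hp _ (by simpa using h)
    · rw [Fintype.sum_option, ← Finset.add_sum_erase _ _ (Finset.mem_univ (i0, true)), h0,
        zero_smul, zero_add] at hs
      rw [← Finset.add_sum_erase _ _ (Finset.mem_univ (i0, true)), ← hs]
      congr 1
      · simp [vert_repl_self Y i0 y e he, extFam]
      · refine Finset.sum_congr rfl fun q hq => ?_
        have hq' : q ≠ (i0, true) := Finset.ne_of_mem_erase hq
        simp only [if_neg hq']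
        rw [vert_repl_of_ne Y i0 y e he q hq']
        rfl
  · rintro ⟨x, hp, hs⟩
    refine ⟨fun o => o.elim (x (i0, true)) (fun q => if q = (i0, true) then 0 else x q),
      ?_, by simp, ?_⟩
    · rw [Fintype.sum_option, ← Finset.add_sum_erase _ _ (Finset.mem_univ (i0, true))]
      rw [← Finset.add_sum_erase _ _ (Finset.mem_univ (i0, true)),
        vert_repl_self Y i0 y e he] at hs
      rw [← hs]
      simp only [Option.elim, if_true, zero_smul, zero_add]
      congr 1
      refine Finset.sum_congr rfl fun q hq => ?_
      have hq' : q ≠ (i0, true) := Finset.ne_of_mem_erase hq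
      rw [if_neg hq', vert_repl_of_ne Y i0 y e he q hq']
      rfl
    · rintro (_ | q) h
      · exact hp _
      · have : q ≠ (i0, true) := fun h' => h (by rw [h'])
        simp only [Option.elim, if_neg this]
        exact hp q

theorem miss_flip {ι V : Type*} [Fintype ι] [DecidableEq ι] [AddCommGroup V] [Module ℝ V]
    (Y : ι → Fin 3 → V) (e : ι → Edge) (y : V) (q : ι × Bool)
    (h : Miss Y e y (some q)) : Miss Y (flipF q e) y (some q) := by
  obtain ⟨x, hs, h0, hp⟩ := h
  refine ⟨x, ?_, h0, hp⟩
  rw [← hs]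
  refine Finset.sum_congr rfl fun o _ => ?_
  by_cases ho : o = some q
  · rw [ho, h0, zero_smul, zero_smul]
  · cases o with
    | none => rfl
    | some r =>
      have : r ≠ q := fun h' => ho (by rw [h'])
      simp [extFam, vert_flipF Y q r e this]

theorem miss_flip_iff {ι V : Type*} [Fintype ι] [DecidableEq ι] [AddCommGroup V] [Module ℝ V]
    (Y : ι → Fin 3 → V) (e : ι → Edge) (y : V) (q : ι × Bool) :
    Miss Y (flipF q e) y (some q) ↔ Miss Y e y (some q) := by
  refine ⟨fun h => ?_, miss_flip Y e y q⟩
  have := miss_flip Y _ y q h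
  rwa [flipF_flipF] at this

theorem cnt_repl {ι V : Type*} [Fintype ι] [DecidableEq ι] [AddCommGroup V] [Module ℝ V]
    [FiniteDimensional ℝ V] (Y : ι → Fin 3 → V) (i0 : ι) (y : V)
    (hcard : 2 * Fintype.card ι = Module.finrank ℝ V + 1)
    (hgen : ∀ e : ι → Edge, (e i0).1.1 = 2 → ∀ x : Option (ι × Bool) → ℝ,
      ∑ o, x o • extFam Y e y o = 0 → ∀ i j, i ≠ j → x i = 0 → x j = 0 → x = 0) :
    cnt Y % 4 = cnt (repl Y i0 y) % 4 := by
  classical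
  rw [cnt_split Y i0, cnt_split (repl Y i0 y) i0]
  have hC : (Finset.univ.filter fun e : ι → Edge =>
        ((e i0).1.1 ≠ 2 ∧ (e i0).1.2 ≠ 2) ∧ PosDep Y e) =
      (Finset.univ.filter fun e : ι → Edge =>
        ((e i0).1.1 ≠ 2 ∧ (e i0).1.2 ≠ 2) ∧ PosDep (repl Y i0 y) e) := by
    refine Finset.filter_congr fun e _ => and_congr_right fun h => ?_
    rw [PosDep, PosDep, vert_repl_other Y i0 y e h.1 h.2]
  rw [hC]
  set F := Finset.univ.filter fun e : ι → Edge => (e i0).1.1 = 2 with hF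
  have key : (((Finset.univ.filter fun e : ι → Edge => (e i0).1.1 = 2 ∧ PosDep Y e).card : ℕ)
      : ZMod 2) + ((Finset.univ.filter fun e : ι → Edge =>
        (e i0).1.1 = 2 ∧ PosDep (repl Y i0 y) e).card : ℕ) = 0 := by
    have hev : ∀ e ∈ F, ∑ o, (if Miss Y e y o then (1 : ZMod 2) else 0) = 0 := by
      intro e he
      have he' : (e i0).1.1 = 2 := by simpa [hF] using he
      have := even_card_posdep (extFam Y e y) (by simp; omega) (hgen e he')
        (Finset.univ.filter fun o => Miss Y e y o) (by intro j; simp [Miss])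
      rw [← Finset.sum_filter, Finset.sum_const, nsmul_eq_mul, mul_one]
      exact (ZMod.natCast_eq_zero_iff_even).2 this
    have hsum := Finset.sum_eq_zero hev
    have hin : ∀ q ∈ Finset.univ.erase (i0, true),
        ∑ e ∈ F, (if Miss Y e y (some q) then (1 : ZMod 2) else 0) = 0 := by
      intro q hq
      have hq' : q ≠ (i0, true) := Finset.ne_of_mem_erase hq
      refine Finset.sum_involution (fun e _ => flipF q e) ?_ ?_ ?_ ?_
      · intro e _
        simp only [miss_flip_iff]
        exact CharTwo.add_self_eq_zero _
      · intro e _ _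
        exact flipF_ne q e
      · intro e he
        have he' : (e i0).1.1 = 2 := by simpa [hF] using he
        have : (flipF q e i0).1.1 = 2 := by
          obtain ⟨j, s⟩ := q
          by_cases hj : i0 = j
          · subst hj
            cases s
            · simpa [flipF, flipE_false_fst] using he'
            · exact absurd rfl hq'
          · simpa [flipF, hj] using he'
        simpa [hF] using this
      · intro e _
        exact flipF_flipF q e
    simp only [Fintype.sum_option, Finset.sum_add_distrib] at hsum
    rw [Finset.sum_comm, ← Finset.add_sum_erase _ _ (Finset.mem_univ (i0, true)),
      Finset.sum_eq_zero hin, add_zero] at hsum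
    rw [← hsum, Finset.card_filter, Finset.card_filter]
    push_cast
    rw [hF, Finset.sum_filter, Finset.sum_filter]
    congr 1
    · refine Finset.sum_congr rfl fun e _ => ?_
      by_cases h : (e i0).1.1 = 2 <;> simp [h, miss_none]
    · refine Finset.sum_congr rfl fun e _ => ?_
      by_cases h : (e i0).1.1 = 2
      · simp [h, miss_some Y e y i0 h]
      · simp [h]
  rw [← Nat.cast_add, ZMod.natCast_eq_zero_iff_even, Nat.even_iff] at key
  omega

end CrossTv

namespace CrossTv

/-- classification of the plane into the six cones of the hexagonal fan -/
noncomputable def cl (s t : ℝ) : Edge :=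
  if 0 < s then
    if t < 0 then ⟨(0, 1), by decide⟩ else if t < s then ⟨(0, 2), by decide⟩
      else ⟨(1, 2), by decide⟩
  else
    if 0 < t then ⟨(1, 0), by decide⟩ else if s < t then ⟨(2, 0), by decide⟩
      else ⟨(2, 1), by decide⟩

theorem cl_smul (r s t : ℝ) (hr : 0 < r) : cl (r * s) (r * t) = cl s t := by
  have h1 : 0 < r * s ↔ 0 < s := mul_pos_iff_of_pos_left hr
  have h2 : 0 < r * t ↔ 0 < t := mul_pos_iff_of_pos_left hr
  have h3 : r * t < 0 ↔ t < 0 := by rw [← not_le, mul_nonneg_iff_of_pos_left hr, not_le]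
  have h4 : r * s < r * t ↔ s < t := mul_lt_mul_iff_right₀ hr
  have h5 : r * t < r * s ↔ t < s := mul_lt_mul_iff_right₀ hr
  simp only [cl, h1, h2, h3, h4, h5]

theorem cl_neg_ne (s t : ℝ) (hs : s ≠ 0) : cl (-s) (-t) ≠ cl s t := by
  intro h
  unfold cl at h
  rcases lt_or_gt_of_ne hs with h0 | h0
  · have h1 : ¬ (0 < s) := by linarith
    have h2 : 0 < -s := by linarith
    rw [if_pos h2, if_neg h1] at h
    split_ifs at h <;> simp at h
  · have h1 : ¬ (0 < -s) := by linarith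
    rw [if_pos h0, if_neg h1] at h
    split_ifs at h <;> simp at h

/-- planar vector from positive coefficients -/
theorem cl_of_pos {V : Type*} [AddCommGroup V] [Module ℝ V] (y : Fin 3 → V)
    (h2 : y 2 = -(y 0 + y 1)) (p : Edge) (l m : ℝ) (hl : 0 < l) (hm : 0 < m) :
    ∃ s t : ℝ, l • y p.1.1 + m • (-(y p.1.2)) = s • y 0 + t • y 1 ∧ cl s t = p ∧ s ≠ 0 := by
  obtain ⟨⟨a, b⟩, hab⟩ := p
  fin_cases a <;> fin_cases b <;>
    simp only [ne_eq, not_true_eq_false] at hab <;> dsimp only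
  · refine ⟨l, -m, ?_, ?_, hl.ne'⟩
    · simp
    · simp [cl, hl, hm]
  · refine ⟨l + m, m, ?_, ?_, by positivity⟩
    · simp [h2]; module
    · have : 0 < l + m := by positivity
      simp [cl, hl, this, hm.not_gt]
  · refine ⟨-m, l, ?_, ?_, by linarith⟩
    · simp; module
    · simp [cl, hl, hm, hm.not_gt, hm.le]
  · refine ⟨m, l + m, ?_, ?_, hm.ne'⟩
    · simp [h2]; module
    · have : ¬ (l + m < 0) := by linarith
      simp [cl, hl.not_gt, this, hm]
  · refine ⟨-l - m, -l, ?_, ?_, by linarith⟩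
    · simp [h2]; module
    · have : ¬ (0 < - l - m) := by linarith
      have h' : - l - m < - l := by linarith
      simp [cl, hl.not_gt, this, h', hm]
  · refine ⟨-l, -l - m, ?_, ?_, by linarith⟩
    · simp [h2]; module
    · have : ¬ (0 < - l) := by linarith
      have h' : ¬ (- l < - l - m) := by linarith
      have h'' : ¬ (0 < - l - m) := by linarith
      simp only [cl, if_neg this, if_neg h', if_neg h'']
      rfl

theorem pos_of_cl {V : Type*} [AddCommGroup V] [Module ℝ V] (y : Fin 3 → V)
    (h2 : y 2 = -(y 0 + y 1)) (s t : ℝ) (hs : s ≠ 0) (ht : t ≠ 0) (hst : s ≠ t) :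
    ∃ l m : ℝ, 0 < l ∧ 0 < m ∧
      l • y (cl s t).1.1 + m • (-(y (cl s t).1.2)) = s • y 0 + t • y 1 := by
  rcases lt_or_gt_of_ne hs with h0 | h0 <;> rcases lt_or_gt_of_ne ht with h1 | h1 <;>
    rcases lt_or_gt_of_ne hst with h3 | h3
  · refine ⟨-t, t - s, by linarith, by linarith, ?_⟩
    simp [cl, h0.not_gt, h1.not_gt, h3, h2]; module
  · refine ⟨-s, s - t, by linarith, by linarith, ?_⟩
    simp [cl, h0.not_gt, h1.not_gt, h3.not_gt, h2]; module
  · refine ⟨t, -s, by linarith, by linarith, ?_⟩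
    simp [cl, h0.not_gt, h1]; module
  · linarith
  · linarith
  · refine ⟨s, -t, by linarith, by linarith, ?_⟩
    simp [cl, h0, h1]
  · refine ⟨t - s, s, by linarith, by linarith, ?_⟩
    simp [cl, h0, h1.not_gt, h3.not_gt, h2]; module
  · refine ⟨s - t, t, by linarith, by linarith, ?_⟩
    simp [cl, h0, h1.not_gt, h3, h2]; module

theorem cnt_linear {ι V : Type*} [Fintype ι] [DecidableEq ι] [Nonempty ι] [AddCommGroup V]
    [Module ℝ V] [FiniteDimensional ℝ V] (Y : ι → Fin 3 → V)
    (h2 : ∀ i, Y i 2 = -(Y i 0 + Y i 1))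
    (hcard : 2 * Fintype.card ι = Module.finrank ℝ V + 1)
    (hgen : ∀ (e : ι → Edge) (x : ι × Bool → ℝ),
      ∑ q, x q • vert Y e q = 0 → ∀ q, x q = 0 → x = 0) :
    cnt Y = 2 := by
  classical
  -- kernel of the linear map
  let Ker : (ι → ℝ) → (ι → ℝ) → Prop := fun s t => ∑ i, (s i • Y i 0 + t i • Y i 1) = 0
  have hnz : ∀ s t, Ker s t → ∀ i, (s i = 0 ∨ t i = 0 ∨ s i = t i) → s = 0 ∧ t = 0 := by
    intro s t hK i hi
    rcases or_assoc.2 hi with hi | hi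
    · have := hgen (fun _ => ⟨(0, 1), by decide⟩) (fun q => if q.2 = true then s q.1 else -(t q.1))
        (by
          rw [Fintype.sum_prod_type]
          rw [← hK]
          refine Finset.sum_congr rfl fun j _ => ?_
          simp [vert])
      have : (fun q : ι × Bool => if q.2 = true then s q.1 else -(t q.1)) = 0 := by
        rcases hi with hi | hi
        · exact this (i, true) (by simpa using hi)
        · exact this (i, false) (by simpa using hi)
      constructor
      · funext j; simpa using congrFun this (j, true)
      · funext j; simpa using congrFun this (j, false)
    · have := hgen (fun j => if j = i then ⟨(0, 2), by decide⟩ else ⟨(0, 1), by decide⟩)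
        (fun q => if q.1 = i then (if q.2 = true then 0 else s i) else
          if q.2 = true then s q.1 else -(t q.1))
        (by
          rw [Fintype.sum_prod_type]
          rw [← hK]
          refine Finset.sum_congr rfl fun j _ => ?_
          by_cases hj : j = i
          · subst hj
            simp [vert, h2, ← hi]
          · simp [vert, hj]) (i, true) (by simp)
      constructor
      · funext j
        by_cases hj : j = i
        · simpa [hj] using congrFun this (j, false)
        · simpa [hj] using congrFun this (j, true)
      · funext j
        by_cases hj : j = i
        · simpa [hj, ← hi] using congrFun this (j, false)
        · simpa [hj] using congrFun this (j, false)
  obtain ⟨s0, t0, hK0, hne0⟩ : ∃ s t, Ker s t ∧ ¬ (s = 0 ∧ t = 0) := by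
    let f : ((ι → ℝ) × (ι → ℝ)) →ₗ[ℝ] V :=
      (Fintype.linearCombination ℝ (fun i => Y i 0)).coprod
        (Fintype.linearCombination ℝ (fun i => Y i 1))
    have hf : ¬ Function.Injective f := by
      intro hinj
      have := LinearMap.finrank_le_finrank_of_injective hinj
      simp at this
      omega
    rw [← LinearMap.ker_eq_bot, LinearMap.ker_eq_bot'] at hf
    push Not at hf
    obtain ⟨⟨s, t⟩, h1, h3⟩ := hf
    refine ⟨s, t, ?_, fun h => h3 (Prod.ext h.1 h.2)⟩
    simp only [Ker, Finset.sum_add_distrib]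
    simpa [f, Fintype.linearCombination_apply] using h1
  have hs0 : ∀ i, s0 i ≠ 0 := fun i h => hne0 (hnz s0 t0 hK0 i (Or.inl h))
  have ht0 : ∀ i, t0 i ≠ 0 := fun i h => hne0 (hnz s0 t0 hK0 i (Or.inr (Or.inl h)))
  have hst0 : ∀ i, s0 i ≠ t0 i := fun i h => hne0 (hnz s0 t0 hK0 i (Or.inr (Or.inr h)))
  have hpos : ∀ s t : ι → ℝ, Ker s t → (∀ i, s i ≠ 0) → (∀ i, t i ≠ 0) → (∀ i, s i ≠ t i) →
      PosDep Y (fun i => cl (s i) (t i)) := by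
    intro s t hK hs ht hst
    choose l m hl hm h using fun i => pos_of_cl (Y i) (h2 i) (s i) (t i) (hs i) (ht i) (hst i)
    refine ⟨fun q => if q.2 = true then l q.1 else m q.1, fun q => ?_, ?_⟩
    · dsimp only
      split_ifs
      · exact hl _
      · exact hm _
    · rw [Fintype.sum_prod_type, ← hK]
      refine Finset.sum_congr rfl fun j _ => ?_
      rw [← h j]
      simp [vert]
  obtain ⟨i0⟩ := ‹Nonempty ι›
  have hset : (Finset.univ.filter fun e : ι → Edge => PosDep Y e) =
      {(fun i => cl (s0 i) (t0 i)), (fun i => cl (-s0 i) (-t0 i))} := by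
    ext e
    simp only [Finset.mem_filter, Finset.mem_univ, true_and, Finset.mem_insert,
      Finset.mem_singleton]
    constructor
    · rintro ⟨x, hx, hs⟩
      choose s t h1 h3 h4 using fun i => cl_of_pos (Y i) (h2 i) (e i) (x (i, true)) (x (i, false))
        (hx _) (hx _)
      have hK : Ker s t := by
        simp only [Ker]
        rw [Fintype.sum_prod_type] at hs
        rw [← hs]
        refine Finset.sum_congr rfl fun j _ => ?_
        rw [← h1 j]
        simp [vert]
      -- proportional
      set r := s i0 / s0 i0 with hr
      have hr0 : r ≠ 0 := div_ne_zero (h4 i0) (hs0 i0)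
      have hprop := hnz (s - r • s0) (t - r • t0) (by
        simp only [Ker] at hK hK0 ⊢
        have : ∀ i, ((s - r • s0) i • Y i 0 + (t - r • t0) i • Y i 1) =
          (s i • Y i 0 + t i • Y i 1) - r • (s0 i • Y i 0 + t0 i • Y i 1) := by
          intro i
          simp only [Pi.sub_apply, Pi.smul_apply, smul_eq_mul]
          module
        simp only [this, Finset.sum_sub_distrib, ← Finset.smul_sum, hK, hK0]
        simp) i0 (Or.inl (by
          have := hs0 i0
          simp only [Pi.sub_apply, Pi.smul_apply, smul_eq_mul, hr]; field_simp; ring))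
      have hsr : ∀ i, s i = r * s0 i := fun i => by
        have := congrFun hprop.1 i
        simp only [Pi.sub_apply, Pi.smul_apply, smul_eq_mul, Pi.zero_apply] at this
        linarith
      have htr : ∀ i, t i = r * t0 i := fun i => by
        have := congrFun hprop.2 i
        simp only [Pi.sub_apply, Pi.smul_apply, smul_eq_mul, Pi.zero_apply] at this
        linarith
      rcases lt_or_gt_of_ne hr0 with hneg | hp
      · right
        funext i
        rw [← h3 i, hsr, htr, ← cl_smul (-r) (-s0 i) (-t0 i) (by linarith)]
        congr 1 <;> ring
      · left
        funext i
        rw [← h3 i, hsr, htr, cl_smul _ _ _ hp]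
    · rintro (rfl | rfl)
      · exact hpos s0 t0 hK0 hs0 ht0 hst0
      · refine hpos (fun i => -s0 i) (fun i => -t0 i) ?_ (fun i => neg_ne_zero.2 (hs0 i))
          (fun i => neg_ne_zero.2 (ht0 i)) (fun i => fun h => hst0 i (neg_injective h))
        simp only [Ker] at hK0 ⊢
        rw [← neg_eq_zero, ← Finset.sum_neg_distrib, ← hK0]
        refine Finset.sum_congr rfl fun j _ => ?_
        module
  have hc : cnt Y = (Finset.univ.filter fun e : ι → Edge => PosDep Y e).card := by
    unfold cnt; congr
  rw [hc, hset, Finset.card_pair]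
  intro h
  exact cl_neg_ne (s0 i0) (t0 i0) (hs0 i0) (congrFun h i0).symm

end CrossTv

namespace CrossTv

section generic

set_option linter.unusedSectionVars false

variable {ι V : Type*} [Fintype ι] [DecidableEq ι] [AddCommGroup V] [Module ℝ V]

/-- the linear map with prescribed values on the standard basis -/
noncomputable def lin (Y : ι → Fin 3 → V) : (ι → Fin 3 → ℝ) →ₗ[ℝ] V where
  toFun w := ∑ i, ∑ k, w i k • Y i k
  map_add' a b := by simp only [Pi.add_apply, add_smul, Finset.sum_add_distrib]
  map_smul' c a := by
    simp only [Pi.smul_apply, smul_assoc, ← Finset.smul_sum, RingHom.id_apply]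

def bas (i : ι) (k : Fin 3) : ι → Fin 3 → ℝ := Pi.single i (Pi.single k 1)

theorem lin_bas (Y : ι → Fin 3 → V) (i : ι) (k : Fin 3) : lin Y (bas i k) = Y i k := by
  simp only [lin, bas, LinearMap.coe_mk, AddHom.coe_mk]
  rw [Finset.sum_eq_single i, Finset.sum_eq_single k]
  · simp
  · intro b _ hb; simp [hb]
  · simp
  · intro b _ hb; simp [hb]
  · simp

/-- parts in `A` are made linear -/
def modY (A : Finset ι) (Y : ι → Fin 3 → V) : ι → Fin 3 → V := fun i k =>
  if k = 2 ∧ i ∈ A then -(Y i 0 + Y i 1) else Y i k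

theorem repl_modY (A : Finset ι) (Y : ι → Fin 3 → V) (i0 : ι) :
    repl (modY A Y) i0 (-(Y i0 0 + Y i0 1)) = modY (insert i0 A) Y := by
  funext i k
  by_cases hi : i = i0
  · subst hi
    by_cases hk : k = 2
    · simp [repl, modY, hk]
    · simp [repl, modY, hk]
  · simp [repl, modY, hi]

theorem lin_modY (A : Finset ι) (Y : ι → Fin 3 → V) (i : ι) (k : Fin 3) :
    lin Y (modY A bas i k) = modY A Y i k := by
  unfold modY
  split_ifs <;> simp [lin_bas]

theorem lin_vert (A : Finset ι) (Y : ι → Fin 3 → V) (e : ι → Edge) (q : ι × Bool) :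
    lin Y (vert (modY A bas) e q) = vert (modY A Y) e q := by
  unfold vert
  split_ifs <;> simp [lin_modY]

theorem lin_extFam (A : Finset ι) (Y : ι → Fin 3 → V) (e : ι → Edge) (i0 : ι)
    (o : Option (ι × Bool)) :
    lin Y (extFam (modY A bas) e (-(bas i0 0 + bas i0 1)) o) =
      extFam (modY A Y) e (-(Y i0 0 + Y i0 1)) o := by
  cases o with
  | none => simp [extFam, lin_bas]
  | some q => exact lin_vert A Y e q

/-- local vectors -/
def loc (b : Prop) [Decidable b] (k : Fin 3) : Fin 3 → ℝ :=
  if k = 2 ∧ b then -(Pi.single 0 1 + Pi.single 1 1) else Pi.single k 1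

theorem modY_bas (A : Finset ι) (i : ι) (k : Fin 3) :
    modY A bas i k = Pi.single i (loc (i ∈ A) k) := by
  unfold modY loc bas
  split_ifs
  · rw [Pi.single_neg, Pi.single_add]
  · rfl

theorem sum_vert_eval (A : Finset ι) (e : ι → Edge) (x : ι × Bool → ℝ) (i : ι) (k : Fin 3) :
    (∑ q, x q • vert (modY A bas) e q) i k =
      x (i, true) * loc (i ∈ A) (e i).1.1 k - x (i, false) * loc (i ∈ A) (e i).1.2 k := by
  rw [Fintype.sum_prod_type, Finset.sum_apply, Finset.sum_apply, Finset.sum_eq_single i]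
  · simp [vert, modY_bas, sub_eq_add_neg]
  · intro j _ hj
    simp [vert, modY_bas, hj.symm]
  · simp

theorem loc_indep (b : Prop) [Decidable b] (p : Edge) (x y : ℝ)
    (h : ∀ k, x * loc b p.1.1 k - y * loc b p.1.2 k = 0) : x = 0 ∧ y = 0 := by
  obtain ⟨⟨a, c⟩, hac⟩ := p
  have h0 := h 0
  have h1 := h 1
  have h2 := h 2
  by_cases hb : b <;> fin_cases a <;> fin_cases c <;>
    first | exact absurd rfl hac | simp_all [loc]

theorem indep_vert (A : Finset ι) (e : ι → Edge) :
    LinearIndependent ℝ (vert (modY A (bas (ι := ι))) e) := by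
  rw [Fintype.linearIndependent_iff]
  intro g hg
  rintro ⟨i, s⟩
  have := loc_indep (i ∈ A) (e i) (g (i, true)) (g (i, false)) (fun k => by
    rw [← sum_vert_eval A e g i k, hg]; rfl)
  cases s
  · exact this.2
  · exact this.1

theorem indep_extFam (A : Finset ι) (i0 : ι) (hi0 : i0 ∉ A) (e : ι → Edge)
    (he : (e i0).1.1 = 2) :
    LinearIndependent ℝ (extFam (modY A (bas (ι := ι))) e (-(bas i0 0 + bas i0 1))) := by
  have hnone : ∀ g : Option (ι × Bool) → ℝ,
      ∑ o, g o • extFam (modY A (bas (ι := ι))) e (-(bas i0 0 + bas i0 1)) o = 0 →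
      g none = 0 := by
    intro g hg
    rw [Fintype.sum_option] at hg
    have h : ∀ k, g none * (-(bas i0 0 + bas i0 1 : ι → Fin 3 → ℝ)) i0 k +
        (g (some (i0, true)) * loc (i0 ∈ A) (e i0).1.1 k -
          g (some (i0, false)) * loc (i0 ∈ A) (e i0).1.2 k) = 0 := by
      intro k
      rw [← sum_vert_eval A e (fun q => g (some q)) i0 k]
      exact congrFun (congrFun hg i0) k
    have hb : (e i0).1.2 ≠ 2 := fun h => (e i0).2 (he.trans h.symm)
    rw [he] at h
    generalize (e i0).1.2 = b at h hb
    have h0 := h 0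
    have h1 := h 1
    fin_cases b <;> simp_all [loc, bas]
  rw [Fintype.linearIndependent_iff]
  intro g hg
  have hn := hnone g hg
  rw [Fintype.sum_option, hn, zero_smul, zero_add] at hg
  have := Fintype.linearIndependent_iff.1 (indep_vert A e) (fun q => g (some q)) hg
  rintro (_ | q)
  · exact hn
  · exact this q

/-- the finite set of vectors that occur -/
def Dset (ι : Type*) [DecidableEq ι] : Set (ι → Fin 3 → ℝ) :=
  Set.range (fun p : ι × Fin 3 => bas p.1 p.2) ∪ Set.range (fun p : ι × Fin 3 => -bas p.1 p.2) ∪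
  (Set.range (fun i : ι => bas i 0 + bas i 1) ∪ Set.range (fun i : ι => -(bas i 0 + bas i 1)))

theorem Dset_finite : (Dset ι).Finite :=
  ((Set.finite_range _).union (Set.finite_range _)).union
    ((Set.finite_range _).union (Set.finite_range _))

theorem vert_mem (A : Finset ι) (e : ι → Edge) (q : ι × Bool) :
    vert (modY A (bas (ι := ι))) e q ∈ Dset ι := by
  unfold vert modY
  split_ifs
  · exact Or.inr (Or.inr ⟨_, rfl⟩)
  · exact Or.inl (Or.inl ⟨(_, _), rfl⟩)
  · exact Or.inr (Or.inl ⟨q.1, by simp⟩)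
  · exact Or.inl (Or.inr ⟨(_, _), rfl⟩)

theorem extFam_mem (A : Finset ι) (e : ι → Edge) (i0 : ι) (o : Option (ι × Bool)) :
    extFam (modY A (bas (ι := ι))) e (-(bas i0 0 + bas i0 1)) o ∈ Dset ι := by
  cases o with
  | none => exact Or.inr (Or.inr ⟨i0, rfl⟩)
  | some q => exact vert_mem A e q

/-- genericity of a configuration -/
def Gen (N : ℕ) (Y : ι → Fin 3 → Fin N → ℝ) : Prop :=
  ∀ κ : Fin N → (ι → Fin 3 → ℝ), LinearIndependent ℝ κ → (∀ k, κ k ∈ Dset ι) →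
    (Matrix.of fun k => lin Y (κ k)).det ≠ 0

theorem Gen.eq_zero {N : ℕ} {Y : ι → Fin 3 → Fin N → ℝ} (hY : Gen N Y) {J : Type*} [Fintype J]
    [DecidableEq J]
    (κ : J → (ι → Fin 3 → ℝ)) (hκ : LinearIndependent ℝ κ) (hD : ∀ k, κ k ∈ Dset ι)
    (T : Finset J) (hT : T.card = N) (x : J → ℝ) (hx : ∀ j, j ∉ T → x j = 0)
    (hs : ∑ j, x j • lin Y (κ j) = 0) : x = 0 := by
  let σ : Fin N ≃ T := (Finset.equivFinOfCardEq hT).symm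
  have hdet := hY (fun k => κ (σ k)) (hκ.comp (fun k => (σ k : J))
    (Subtype.val_injective.comp σ.injective)) (fun k => hD _)
  have hli := Matrix.linearIndependent_rows_of_det_ne_zero hdet
  rw [Fintype.linearIndependent_iff] at hli
  have hsum : ∑ k, x (σ k) • lin Y (κ (σ k)) = 0 := by
    rw [Equiv.sum_comp σ (fun t : T => x t • lin Y (κ t)), Finset.sum_coe_sort T
      (fun t => x t • lin Y (κ t)), ← hs]
    apply Finset.sum_subset (Finset.subset_univ _)
    intro j _ hj
    rw [hx j hj, zero_smul]
  have := hli (fun k => x (σ k)) hsum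
  funext j
  by_cases hj : j ∈ T
  · simpa using this (σ.symm ⟨j, hj⟩)
  · exact hx j hj

theorem dense_one {N : ℕ} (κ : Fin N → (ι → Fin 3 → ℝ)) (hκ : LinearIndependent ℝ κ) :
    Dense {Y : ι → Fin 3 → Fin N → ℝ | (Matrix.of fun k => lin Y (κ k)).det ≠ 0} := by
  intro Y
  have hinj : Function.Injective (Fintype.linearCombination ℝ κ) := by
    rw [← LinearMap.ker_eq_bot, LinearMap.ker_eq_bot']
    intro m hm
    funext k
    exact Fintype.linearIndependent_iff.1 hκ m hm k
  obtain ⟨g, hg⟩ := LinearMap.exists_leftInverse_of_injective _ (LinearMap.ker_eq_bot.2 hinj)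
  let Y0 : ι → Fin 3 → Fin N → ℝ := fun i k => g (bas i k)
  have hY0 : ∀ w, lin Y0 w = g w := by
    intro w
    have : w = ∑ i, ∑ k, w i k • bas i k := by
      funext a b
      simp only [Finset.sum_apply]
      rw [Finset.sum_eq_single a, Finset.sum_eq_single b]
      · simp [bas]
      · intro c _ hc; simp [bas, hc.symm]
      · simp
      · intro c _ hc; simp [bas, hc.symm]
      · simp
    conv_rhs => rw [this]
    simp [lin, Y0]
  let M : Matrix (Fin N) (Fin N) ℝ := Matrix.of fun k => lin Y (κ k)
  have hlin : ∀ (t : ℝ), (Matrix.of fun k => lin (Y + t • Y0) (κ k)) =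
      Matrix.scalar (Fin N) t - (-M) := by
    intro t
    have h1 : ∀ w, lin (Y + t • Y0) w = lin Y w + t • lin Y0 w := by
      intro w
      simp [lin, smul_add, Finset.sum_add_distrib, Finset.smul_sum, smul_comm t]
    ext k l
    have h2 : g (κ k) = Pi.single k 1 := by
      have := LinearMap.congr_fun hg (Pi.single k 1)
      simpa using this
    simp only [Matrix.of_apply, h1, hY0, h2, M, sub_neg_eq_add, Matrix.add_apply,
      Matrix.scalar_apply, Pi.add_apply, Pi.smul_apply, smul_eq_mul]
    rw [Matrix.diagonal_apply, Pi.single_apply]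
    by_cases hkl : k = l
    · simp [hkl, add_comm]
    · simp [hkl, Ne.symm hkl]
  have hS : Dense {t : ℝ | (-M).charpoly.eval t ≠ 0} := by
    have hfin : {t : ℝ | (-M).charpoly.eval t = 0}.Finite := by
      have := (-M).charpoly.rootSet_finite ℝ
      refine this.subset fun t ht => ?_
      rw [Polynomial.mem_rootSet]
      exact ⟨(Matrix.charpoly_monic _).ne_zero, by simpa using ht⟩
    have := hfin.countable.dense_compl ℝ
    exact this
  have hmap : Continuous (fun t : ℝ => Y + t • Y0) := by fun_prop
  have := map_mem_closure hmap (hS 0) (t := {Y : ι → Fin 3 → Fin N → ℝ |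
    (Matrix.of fun k => lin Y (κ k)).det ≠ 0}) (by
      intro t ht
      show (Matrix.of fun k => lin (Y + t • Y0) (κ k)).det ≠ 0
      rw [hlin, ← Matrix.eval_charpoly]
      exact ht)
  simpa using this

theorem dense_gen (N : ℕ) : Dense {Y : ι → Fin 3 → Fin N → ℝ | Gen N Y} := by
  let C : Set (Fin N → (ι → Fin 3 → ℝ)) := {κ | LinearIndependent ℝ κ ∧ ∀ k, κ k ∈ Dset ι}
  have hC : C.Countable := by
    have : (Set.pi Set.univ fun _ : Fin N => Dset ι).Finite :=
      Set.Finite.pi fun _ => Dset_finite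
    exact (this.subset fun κ hκ k _ => hκ.2 k).countable
  have := dense_biInter_of_isOpen (S := C)
    (f := fun κ => {Y : ι → Fin 3 → Fin N → ℝ | (Matrix.of fun k => lin Y (κ k)).det ≠ 0})
    (by
      intro κ _
      apply isOpen_ne_fun _ continuous_const
      apply Continuous.matrix_det
      refine continuous_matrix fun k l => ?_
      simp only [lin, LinearMap.coe_mk, AddHom.coe_mk, Matrix.of_apply]
      fun_prop) hC (fun κ hκ => dense_one κ hκ.1)
  refine this.mono fun Y hY κ h1 h2 => ?_
  exact Set.mem_iInter₂.1 hY κ ⟨h1, h2⟩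

theorem Gen.cnt {N : ℕ} [Nonempty ι] (hN : 2 * Fintype.card ι = N + 1)
    {Y : ι → Fin 3 → Fin N → ℝ} (hY : Gen N Y) : CrossTv.cnt Y % 4 = 2 := by
  have hN' : 2 * Fintype.card ι = Module.finrank ℝ (Fin N → ℝ) + 1 := by simpa using hN
  have hstep : ∀ A : Finset ι, CrossTv.cnt Y % 4 = CrossTv.cnt (modY A Y) % 4 := by
    intro A
    induction A using Finset.induction_on with
    | empty => congr 2; funext i k; simp [modY]
    | insert i0 A hi0 ih =>
      rw [ih, ← repl_modY]
      refine cnt_repl _ _ _ hN' ?_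
      intro e he x hx i j hij hi hj
      refine hY.eq_zero _ (indep_extFam A i0 hi0 e he) (extFam_mem A e i0)
        ((Finset.univ.erase i).erase j) ?_ x ?_ ?_
      · rw [Finset.card_erase_of_mem (by simp [hij.symm]), Finset.card_erase_of_mem (by simp)]
        simp
        omega
      · intro k hk
        simp only [Finset.mem_erase, Finset.mem_univ, and_true, not_and_or, not_not] at hk
        rcases hk with rfl | rfl
        · exact hj
        · exact hi
      · simpa only [lin_extFam] using hx
  rw [hstep Finset.univ, cnt_linear]
  · intro i; simp [modY]
  · exact hN'
  · intro e x hx q hq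
    refine hY.eq_zero _ (indep_vert Finset.univ e) (vert_mem _ e) (Finset.univ.erase q) ?_ x ?_ ?_
    · rw [Finset.card_erase_of_mem (by simp)]
      simp
      omega
    · intro k hk
      simp only [Finset.mem_erase, Finset.mem_univ, and_true, not_not] at hk
      rw [hk, hq]
    · simpa only [lin_vert] using hx

/-- Linear van Kampen--Flores type theorem for the join of `n+1` three point sets. -/
theorem exists_zero {N : ℕ} [Nonempty ι] (hN : 2 * Fintype.card ι = N + 1)
    (Y : ι → Fin 3 → Fin N → ℝ) :
    ∃ (e : ι → Edge), ∃ x ∈ stdSimplex ℝ (ι × Bool), ∑ q, x q • vert Y e q = 0 := by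
  classical
  let B : Set (ι → Fin 3 → Fin N → ℝ) :=
    ⋃ e : ι → Edge, {Y | ∃ x ∈ stdSimplex ℝ (ι × Bool), ∑ q, x q • vert Y e q = 0}
  have hB : IsClosed B := by
    refine isClosed_iUnion_of_finite fun e => ?_
    have hK : CompactSpace (stdSimplex ℝ (ι × Bool)) :=
      isCompact_iff_compactSpace.1 (isCompact_stdSimplex ℝ (ι × Bool))
    have h1 : IsClosed {p : stdSimplex ℝ (ι × Bool) × (ι → Fin 3 → Fin N → ℝ) |
        ∑ q, (p.1 : ι × Bool → ℝ) q • vert p.2 e q = 0} := by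
      apply isClosed_eq _ continuous_const
      refine continuous_finsetSum _ fun q _ => ?_
      have hv : Continuous fun p : stdSimplex ℝ (ι × Bool) × (ι → Fin 3 → Fin N → ℝ) =>
          vert p.2 e q := by
        unfold vert
        split_ifs <;> fun_prop
      have hx : Continuous fun p : stdSimplex ℝ (ι × Bool) × (ι → Fin 3 → Fin N → ℝ) =>
          (p.1 : ι × Bool → ℝ) q :=
        (continuous_apply q).comp (continuous_subtype_val.comp continuous_fst)
      exact hx.smul hv
    convert isClosedMap_snd_of_compactSpace _ h1 using 1
    ext Y
    constructor
    · rintro ⟨x, hx, h⟩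
      exact ⟨(⟨x, hx⟩, Y), h, rfl⟩
    · rintro ⟨⟨x, Y'⟩, h, rfl⟩
      exact ⟨x.1, x.2, h⟩
  have hsub : {Y : ι → Fin 3 → Fin N → ℝ | Gen N Y} ⊆ B := by
    intro Y hY
    have h := Gen.cnt hN hY
    have hne : CrossTv.cnt Y ≠ 0 := by omega
    unfold CrossTv.cnt at hne
    obtain ⟨e, he⟩ := Finset.card_pos.1 (Nat.pos_of_ne_zero hne)
    obtain ⟨x, hx, hs⟩ := (Finset.mem_filter.1 he).2
    refine Set.mem_iUnion.2 ⟨e, ?_⟩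
    have hpos : 0 < ∑ q, x q := Finset.sum_pos (fun q _ => hx q) Finset.univ_nonempty
    refine ⟨fun q => x q / ∑ r, x r, ⟨fun q => (div_pos (hx q) hpos).le, ?_⟩, ?_⟩
    · rw [← Finset.sum_div, div_self hpos.ne']
    · simp only [div_eq_inv_mul, mul_smul, ← Finset.smul_sum, hs, smul_zero]
  have : Y ∈ B := by
    have h := hB.closure_subset_iff.2 hsub
    exact h (dense_gen N Y)
  exact Set.mem_iUnion.1 this

end generic

end CrossTv

namespace CrossTv

/-- In general position, a nontrivial nonnegative dependency extends to a positive one. -/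
theorem pos_ext {V : Type*} [AddCommGroup V] [Module ℝ V] [FiniteDimensional ℝ V]
    {J : Type*} [Fintype J] [DecidableEq J] (a : J → V)
    (hcard : Module.finrank ℝ V ≤ Fintype.card J)
    (hgen : ∀ T : Finset J, T.card = Module.finrank ℝ V → ∀ x : J → ℝ,
      (∀ j, j ∉ T → x j = 0) → ∑ j, x j • a j = 0 → x = 0)
    (x : J → ℝ) (hx : ∀ j, 0 ≤ x j) (hx0 : x ≠ 0) (hs : ∑ j, x j • a j = 0) :
    ∃ z : J → ℝ, (∀ j, 0 < z j) ∧ ∑ j, z j • a j = 0 := by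
  classical
  set S : Finset J := Finset.univ.filter fun j => x j ≠ 0 with hS
  have hSc : Module.finrank ℝ V ≤ S.card := by
    by_contra hlt
    obtain ⟨T, hST, hT⟩ := Finset.exists_superset_card_eq (s := S) (not_le.1 hlt).le hcard
    refine hx0 (hgen T hT x (fun j hj => ?_) hs)
    by_contra h
    exact hj (hST (by simp [hS, h]))
  obtain ⟨T, hTS, hT⟩ := Finset.exists_subset_card_eq hSc
  -- spanning
  let f : (T → ℝ) →ₗ[ℝ] V := Fintype.linearCombination ℝ (fun t : T => a t)
  have hsum : ∀ m : T → ℝ, ∑ j, (if h : j ∈ T then m ⟨j, h⟩ else 0) • a j = f m := by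
    intro m
    rw [← Finset.sum_subset (Finset.subset_univ T), ← Finset.sum_coe_sort T]
    · refine Finset.sum_congr rfl fun t _ => ?_
      simp
    · intro j _ hj
      simp [hj]
  have hinj : Function.Injective f := by
    rw [← LinearMap.ker_eq_bot, LinearMap.ker_eq_bot']
    intro m hm
    have := hgen T hT (fun j => if h : j ∈ T then m ⟨j, h⟩ else 0)
      (fun j hj => by simp [hj]) (by rw [hsum, hm])
    funext t
    simpa using congrFun this t
  have hsurj : Function.Surjective f :=
    (LinearMap.injective_iff_surjective_of_finrank_eq_finrank (by simp [hT])).1 hinj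
  obtain ⟨m, hm⟩ := hsurj (-∑ j ∈ Sᶜ, a j)
  let g : J → ℝ := fun j => (if h : j ∈ T then m ⟨j, h⟩ else 0) + if j ∈ S then 0 else 1
  have hg : ∑ j, g j • a j = 0 := by
    simp only [g, add_smul, Finset.sum_add_distrib]
    rw [hsum, hm]
    have : ∑ j, (if j ∈ S then (0 : ℝ) else 1) • a j = ∑ j ∈ Sᶜ, a j := by
      rw [← Finset.sum_subset (Finset.subset_univ Sᶜ)]
      · refine Finset.sum_congr rfl fun j hj => ?_
        rw [if_neg (Finset.mem_compl.1 hj), one_smul]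
      · intro j _ hj
        rw [if_pos (by simpa using hj), zero_smul]
    rw [this]; simp
  have hev : ∀ j, ∀ᶠ ε in nhdsWithin (0 : ℝ) (Set.Ioi 0), 0 < x j + ε * g j := by
    intro j
    by_cases hj : j ∈ S
    · have hpos : 0 < x j := lt_of_le_of_ne (hx j) (by simpa [hS, eq_comm] using hj)
      have hc : Filter.Tendsto (fun ε : ℝ => x j + ε * g j) (nhds 0) (nhds (x j + 0 * g j)) := by
        apply Continuous.tendsto; fun_prop
      rw [zero_mul, add_zero] at hc
      exact Filter.Eventually.filter_mono nhdsWithin_le_nhds (hc.eventually_const_lt hpos)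
    · have hgj : g j = 1 := by
        have : j ∉ T := fun h => hj (hTS h)
        simp [g, hj, this]
      filter_upwards [self_mem_nhdsWithin] with ε hε
      rw [hgj, mul_one]
      exact add_pos_of_nonneg_of_pos (hx j) hε
  obtain ⟨ε, hε⟩ := (Filter.eventually_all.2 hev).exists
  refine ⟨fun j => x j + ε * g j, hε, ?_⟩
  simp only [add_smul, mul_smul, Finset.sum_add_distrib, ← Finset.smul_sum, hs, hg]
  simp

/-- A weak crossing of the convex hulls is a crossing of relative interiors. -/
theorem cross_of_weak {d : ℕ} (hd : 1 ≤ d) {α : Type*} [DecidableEq α]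
    (v : α → EuclideanSpace ℝ (Fin d))
    (hgen : ∀ s : Finset α, s.card = d + 1 → AffineIndependent ℝ (fun i : s => v i.1))
    (u w : Fin d → α) (hu : Function.Injective u) (hw : Function.Injective w)
    (huw : ∀ i j, u i ≠ w j) (l m : Fin d → ℝ) (hl : ∀ i, 0 ≤ l i) (hm : ∀ i, 0 ≤ m i)
    (hlm : ∑ i, l i = ∑ i, m i) (hne : ∑ i, l i ≠ 0)
    (hs : ∑ i, l i • v (u i) = ∑ i, m i • v (w i)) :
    (intrinsicInterior ℝ (convexHull ℝ (v '' ((Finset.univ.image u : Finset α) : Set α))) ∩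
      intrinsicInterior ℝ
        (convexHull ℝ (v '' ((Finset.univ.image w : Finset α) : Set α)))).Nonempty := by
  classical
  haveI : Nonempty (Fin d) := ⟨⟨0, hd⟩⟩
  let a : Fin d ⊕ Fin d → EuclideanSpace ℝ (Fin d) × ℝ :=
    Sum.elim (fun i => (v (u i), 1)) (fun i => -(v (w i), 1))
  have hrank : Module.finrank ℝ (EuclideanSpace ℝ (Fin d) × ℝ) = d + 1 := by simp
  have hinj : Function.Injective (Sum.elim u w) := by
    rintro (i | i) (j | j) h
    · exact congrArg _ (hu h)
    · exact absurd h (huw i j)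
    · exact absurd h.symm (huw j i)
    · exact congrArg _ (hw h)
  obtain ⟨z, hz, hzs⟩ := pos_ext a (by rw [hrank]; simp; omega) (by
      intro T hT x hx hsum
      rw [hrank] at hT
      have hcardT : (T.image (Sum.elim u w)).card = d + 1 := by
        rw [Finset.card_image_of_injective _ hinj, hT]
      have hAI := hgen _ hcardT
      let emb : T ↪ (T.image (Sum.elim u w) : Finset α) :=
        ⟨fun t => ⟨Sum.elim u w t, Finset.mem_image_of_mem _ t.2⟩, fun s t h => by
          apply Subtype.ext; apply hinj; simpa using congrArg Subtype.val h⟩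
      have hAI2 := hAI.comp_embedding emb
      rw [affineIndependent_iff] at hAI2
      let sg : Fin d ⊕ Fin d → ℝ := Sum.elim (fun _ => 1) (fun _ => -1)
      have ha : ∀ j, a j = sg j • (v (Sum.elim u w j), (1 : ℝ)) := by
        rintro (i | i) <;> simp [a, sg]
      have hsumT : ∑ j ∈ T, x j • a j = 0 := by
        rw [← hsum]
        apply Finset.sum_subset (Finset.subset_univ T)
        intro j _ hj
        rw [hx j hj, zero_smul]
      rw [← Finset.sum_coe_sort T] at hsumT
      have := hAI2 Finset.univ (fun t : T => x t * sg t) (by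
          have := congrArg Prod.snd hsumT
          simpa [ha, Prod.snd_sum] using this) (by
          have h' : ∑ t : T, (x t * sg t) • v (Sum.elim u w t) = 0 := by
            have := congrArg Prod.fst hsumT
            simpa [ha, Prod.fst_sum, smul_smul] using this
          exact h')
      funext j
      by_cases hj : j ∈ T
      · have h := this ⟨j, hj⟩ (Finset.mem_univ _)
        have hsg : sg j ≠ 0 := by rcases j with i | i <;> simp [sg]
        simpa [hsg] using h
      · exact hx j hj)
    (Sum.elim l m) (by rintro (i | i); exacts [hl i, hm i]) (by
      intro h
      apply hne
      refine Finset.sum_eq_zero fun i _ => ?_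
      simpa using congrFun h (Sum.inl i)) (by
      rw [Fintype.sum_sum_type]
      simp only [a, Sum.elim_inl, Sum.elim_inr, smul_neg, Finset.sum_neg_distrib]
      rw [add_neg_eq_zero]
      ext1
      · simpa [Prod.fst_sum] using hs
      · simpa [Prod.snd_sum] using hlm)
  rw [Fintype.sum_sum_type] at hzs
  simp only [a, Sum.elim_inl, Sum.elim_inr, smul_neg, Finset.sum_neg_distrib] at hzs
  rw [add_neg_eq_zero] at hzs
  have h1 : ∑ i, z (Sum.inl i) = ∑ i, z (Sum.inr i) := by
    simpa [Prod.snd_sum] using congrArg Prod.snd hzs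
  have h2 : ∑ i, z (Sum.inl i) • v (u i) = ∑ i, z (Sum.inr i) • v (w i) := by
    simpa [Prod.fst_sum] using congrArg Prod.fst hzs
  set s := ∑ i, z (Sum.inl i) with hsdef
  have hs0 : 0 < s := Finset.sum_pos (fun i _ => hz _) Finset.univ_nonempty
  refine ⟨∑ i, (s⁻¹ * z (Sum.inl i)) • v (u i), ?_, ?_⟩
  · have := pos_comb_mem_intrinsicInterior (fun i => v (u i)) (fun i => s⁻¹ * z (Sum.inl i))
      (fun i => mul_pos (inv_pos.2 hs0) (hz _)) (by
        rw [← Finset.mul_sum, ← hsdef, inv_mul_cancel₀ hs0.ne'])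
    have hr : v '' ((Finset.univ.image u : Finset α) : Set α) = Set.range (fun i => v (u i)) := by
      rw [Finset.coe_image, Finset.coe_univ, Set.image_univ, ← Set.range_comp]; rfl
    rw [hr]
    exact this
  · have := pos_comb_mem_intrinsicInterior (fun i => v (w i)) (fun i => s⁻¹ * z (Sum.inr i))
      (fun i => mul_pos (inv_pos.2 hs0) (hz _)) (by
        rw [← Finset.mul_sum, ← h1, inv_mul_cancel₀ hs0.ne'])
    have hr : v '' ((Finset.univ.image w : Finset α) : Set α) = Set.range (fun i => v (w i)) := by
      rw [Finset.coe_image, Finset.coe_univ, Set.image_univ, ← Set.range_comp]; rfl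
    rw [hr]
    convert this using 1
    simp only [mul_smul, ← Finset.smul_sum, h2]

theorem sum_dite_zero {β : Type*} [Fintype β] (p : β → Prop) [DecidablePred p] {M : Type*}
    [AddCommMonoid M] (f : {i // p i} → M) (g : β → M) (h1 : ∀ i : {i // p i}, g i = f i)
    (h2 : ∀ i, ¬ p i → g i = 0) : ∑ i, g i = ∑ i, f i := by
  rw [← Fintype.sum_subtype_add_sum_subtype p g]
  rw [Finset.sum_congr rfl (fun i _ => h1 i)]
  rw [Finset.sum_eq_zero (s := (Finset.univ : Finset {i // ¬ p i})) (fun i _ => h2 i i.2), add_zero]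

end CrossTv

theorem crossing_pairs_tverberg_step (d : ℕ) (hd : 4 ≤ d)
    (v : Fin (3 * ((d + 1) / 2 + 1) + 2 * (d / 2 - 1)) → EuclideanSpace ℝ (Fin d))
    (hinj : Function.Injective v)
    (hgen : ∀ s : Finset (Fin (3 * ((d + 1) / 2 + 1) + 2 * (d / 2 - 1))),
      s.card = d + 1 → AffineIndependent ℝ (fun i : s => v i.1))
    (P : Fin (3 * ((d + 1) / 2 + 1) + 2 * (d / 2 - 1)) → Fin d)
    (hP : ∀ i : Fin d, (Finset.univ.filter fun j => P j = i).card =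
      if (i : ℕ) < (d + 1) / 2 + 1 then 3 else 2) :
    (2 ^ (d / 2 - 1) : ℕ) ≤
      ({Q : Sym2 (Finset (Fin (3 * ((d + 1) / 2 + 1) + 2 * (d / 2 - 1)))) |
        ∃ U' W' : Finset (Fin (3 * ((d + 1) / 2 + 1) + 2 * (d / 2 - 1))),
          Q = s(U', W') ∧ Disjoint U' W' ∧ U'.card = d ∧ W'.card = d ∧
          (∀ i : Fin d, (U'.filter fun j => P j = i).card = 1) ∧
          (∀ i : Fin d, (W'.filter fun j => P j = i).card = 1) ∧
          (intrinsicInterior ℝ (convexHull ℝ (v '' (U' : Set _))) ∩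
            intrinsicInterior ℝ (convexHull ℝ (v '' (W' : Set _)))).Nonempty}).ncard := by
  classical
  generalize 3 * ((d + 1) / 2 + 1) + 2 * (d / 2 - 1) = n at v hinj hgen P hP ⊢
  obtain ⟨m, hm⟩ : ∃ m, m = (d + 1) / 2 + 1 := ⟨_, rfl⟩
  have hmd : m ≤ d := by omega
  rw [← hm] at hP
  let ι := {i : Fin d // (i : ℕ) < m}
  let κ := {i : Fin d // ¬ (i : ℕ) < m}
  have hcι : Fintype.card ι = m := Fintype.card_fin_lt_of_le hmd
  have hcκ : Fintype.card κ = d / 2 - 1 := by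
    have h1 := Fintype.card_subtype_compl (fun i : Fin d => (i : ℕ) < m)
    have h2 : Fintype.card κ = d - Fintype.card ι := by
      rw [Fintype.card_fin] at h1
      convert h1
    rw [h2, hcι]; omega
  haveI : Nonempty ι := ⟨⟨⟨0, by omega⟩, by simp; omega⟩⟩
  -- enumerations of the parts
  have hg3 : ∀ i : ι, ∃ f : Fin 3 → Fin n, Function.Injective f ∧ ∀ k, P (f k) = i.1 := by
    intro i
    have hc := hP i.1
    rw [if_pos i.2] at hc
    let E := (Finset.equivFinOfCardEq hc).symm
    refine ⟨fun k => E k, Subtype.val_injective.comp E.injective, fun k => ?_⟩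
    exact (Finset.mem_filter.1 (E k).2).2
  have hg2 : ∀ i : κ, ∃ f : Bool → Fin n, f true ≠ f false ∧ ∀ k, P (f k) = i.1 := by
    intro i
    have hc := hP i.1
    rw [if_neg i.2] at hc
    obtain ⟨x, y, hxy, hs⟩ := Finset.card_eq_two.1 hc
    have hx : P x = i.1 := by
      have : x ∈ Finset.univ.filter fun j => P j = i.1 := by rw [hs]; simp
      simpa using this
    have hy : P y = i.1 := by
      have : y ∈ Finset.univ.filter fun j => P j = i.1 := by rw [hs]; simp
      simpa using this
    refine ⟨fun b => if b = true then x else y, by simpa using hxy, fun k => ?_⟩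
    cases k <;> simp [hx, hy]
  choose g hgi hgP using hg3
  choose t hti htP using hg2
  -- apply the van Kampen--Flores theorem
  let Y : ι → Fin 3 → Fin (2 * m - 1) → ℝ := fun i k l =>
    if h : (l : ℕ) < d then v (g i k) ⟨l, h⟩ else 1
  obtain ⟨e, x, ⟨hx0, hx1⟩, hxs⟩ := CrossTv.exists_zero (N := 2 * m - 1) (by rw [hcι]; omega) Y
  rw [Fintype.sum_prod_type] at hxs hx1
  simp only [Fintype.sum_bool, CrossTv.vert, if_true, Bool.false_eq_true, if_false] at hxs hx1
  have hco : ∀ l, ∑ i, x (i, true) * Y i (e i).1.1 l = ∑ i, x (i, false) * Y i (e i).1.2 l := by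
    intro l
    have := congrFun hxs l
    simp only [Finset.sum_apply, Pi.add_apply, Pi.smul_apply, Pi.neg_apply, smul_eq_mul,
      Finset.sum_add_distrib, mul_neg, Finset.sum_neg_distrib, Pi.zero_apply] at this
    linarith
  have hwt : ∑ i, x (i, true) = ∑ i, x (i, false) := by
    have := hco ⟨d, by omega⟩
    simpa [Y] using this
  have hwt0 : ∑ i, x (i, true) ≠ 0 := by
    intro h
    rw [Finset.sum_add_distrib, ← hwt, h] at hx1
    norm_num at hx1
  have hpt : ∑ i, x (i, true) • v (g i (e i).1.1) = ∑ i, x (i, false) • v (g i (e i).1.2) := by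
    ext l
    have := hco ⟨l, by omega⟩
    simpa [Y] using this
  -- the selections
  let u : (κ → Bool) → Fin d → Fin n := fun c i =>
    if h : (i : ℕ) < m then g ⟨i, h⟩ (e ⟨i, h⟩).1.1 else t ⟨i, h⟩ (c ⟨i, h⟩)
  let w : (κ → Bool) → Fin d → Fin n := fun c i =>
    if h : (i : ℕ) < m then g ⟨i, h⟩ (e ⟨i, h⟩).1.2 else t ⟨i, h⟩ (!(c ⟨i, h⟩))
  have huP : ∀ c i, P (u c i) = i := by
    intro c i
    simp only [u]
    split_ifs
    · rw [hgP]
    · rw [htP]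
  have hwP : ∀ c i, P (w c i) = i := by
    intro c i
    simp only [w]
    split_ifs
    · rw [hgP]
    · rw [htP]
  have huI : ∀ c, Function.Injective (u c) := fun c => Function.LeftInverse.injective (huP c)
  have hwI : ∀ c, Function.Injective (w c) := fun c => Function.LeftInverse.injective (hwP c)
  have hne : ∀ c i, u c i ≠ w c i := by
    intro c i
    simp only [u, w]
    split_ifs with h
    · exact fun h' => (e ⟨i, h⟩).2 (hgi _ h')
    · cases c ⟨i, h⟩
      · exact (hti _).symm
      · exact hti _
  have huw : ∀ c i j, u c i ≠ w c j := by
    intro c i j h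
    have hij : i = j := by rw [← huP c i, ← hwP c j, h]
    subst hij
    exact hne c i h
  have himg : ∀ f f' : Fin d → Fin n, (∀ i, P (f i) = i) → (∀ i, P (f' i) = i) →
      Finset.univ.image f = Finset.univ.image f' → f = f' := by
    intro f f' hf hf' h
    funext i
    have : f i ∈ Finset.univ.image f' := by rw [← h]; simp
    obtain ⟨j, _, hj⟩ := Finset.mem_image.1 this
    have hij : i = j := by rw [← hf i, ← hf' j, hj]
    subst hij
    exact hj.symm
  have hone : ∀ f : Fin d → Fin n, (∀ i, P (f i) = i) → ∀ i,
      ((Finset.univ.image f).filter fun j => P j = i).card = 1 := by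
    intro f hf i
    rw [Finset.card_eq_one]
    refine ⟨f i, ?_⟩
    ext j
    simp only [Finset.mem_filter, Finset.mem_image, Finset.mem_univ, true_and,
      Finset.mem_singleton]
    constructor
    · rintro ⟨⟨k, rfl⟩, hk⟩
      rw [hf] at hk
      rw [hk]
    · rintro rfl
      exact ⟨⟨i, rfl⟩, hf i⟩
  let Φ : (κ → Bool) → Sym2 (Finset (Fin n)) := fun c =>
    s(Finset.univ.image (u c), Finset.univ.image (w c))
  have hΦ : Function.Injective Φ := by
    intro c c' h
    simp only [Φ, Sym2.eq_iff] at h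
    rcases h with ⟨h, _⟩ | ⟨h, _⟩
    · have h' := himg _ _ (huP c) (huP c') h
      funext i
      have := congrFun h' i.1
      simp only [u, dif_neg i.2] at this
      have hi := hti i
      revert this
      cases c i <;> cases c' i <;> simp [hi, hi.symm]
    · have h' := himg _ _ (huP c) (hwP c') h
      obtain ⟨i⟩ := ‹Nonempty ι›
      have := congrFun h' i.1
      simp only [u, w, dif_pos i.2] at this
      exact absurd (hgi _ this) (e i).2
  have hsub : Set.range Φ ⊆ {Q : Sym2 (Finset (Fin n)) |
        ∃ U' W' : Finset (Fin n),
          Q = s(U', W') ∧ Disjoint U' W' ∧ U'.card = d ∧ W'.card = d ∧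
          (∀ i : Fin d, (U'.filter fun j => P j = i).card = 1) ∧
          (∀ i : Fin d, (W'.filter fun j => P j = i).card = 1) ∧
          (intrinsicInterior ℝ (convexHull ℝ (v '' (U' : Set _))) ∩
            intrinsicInterior ℝ (convexHull ℝ (v '' (W' : Set _)))).Nonempty} := by
    rintro _ ⟨c, rfl⟩
    refine ⟨_, _, rfl, ?_, ?_, ?_, hone _ (huP c), hone _ (hwP c), ?_⟩
    · rw [Finset.disjoint_left]
      intro j hj hj'
      obtain ⟨a, _, rfl⟩ := Finset.mem_image.1 hj
      obtain ⟨b, _, hb⟩ := Finset.mem_image.1 hj'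
      exact huw c a b hb.symm
    · rw [Finset.card_image_of_injective _ (huI c)]; simp
    · rw [Finset.card_image_of_injective _ (hwI c)]; simp
    · let l : Fin d → ℝ := fun i => if h : (i : ℕ) < m then x (⟨i, h⟩, true) else 0
      let r : Fin d → ℝ := fun i => if h : (i : ℕ) < m then x (⟨i, h⟩, false) else 0
      have hl : ∑ i, l i = ∑ i : ι, x (i, true) :=
        CrossTv.sum_dite_zero (fun i : Fin d => (i : ℕ) < m) _ _
          (fun i => by simp [l, i.2]) (fun i hi => by simp [l, hi])
      have hr : ∑ i, r i = ∑ i : ι, x (i, false) :=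
        CrossTv.sum_dite_zero (fun i : Fin d => (i : ℕ) < m) _ _
          (fun i => by simp [r, i.2]) (fun i hi => by simp [r, hi])
      have hl2 : ∑ i, l i • v (u c i) = ∑ i : ι, x (i, true) • v (g i (e i).1.1) :=
        CrossTv.sum_dite_zero (fun i : Fin d => (i : ℕ) < m) _ _
          (fun i => by simp [l, u, i.2]) (fun i hi => by simp [l, hi])
      have hr2 : ∑ i, r i • v (w c i) = ∑ i : ι, x (i, false) • v (g i (e i).1.2) :=
        CrossTv.sum_dite_zero (fun i : Fin d => (i : ℕ) < m) _ _
          (fun i => by simp [r, w, i.2]) (fun i hi => by simp [r, hi])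
      refine CrossTv.cross_of_weak (by omega) v hgen (u c) (w c) (huI c) (hwI c) (huw c) l r
        ?_ ?_ ?_ ?_ ?_
      · intro i
        simp only [l]
        split_ifs
        · exact hx0 _
        · exact le_rfl
      · intro i
        simp only [r]
        split_ifs
        · exact hx0 _
        · exact le_rfl
      · rw [hl, hr, hwt]
      · rw [hl]; exact hwt0
      · rw [hl2, hr2, hpt]
  have hcard : (Set.range Φ).ncard = 2 ^ (d / 2 - 1) := by
    rw [← Set.image_univ, Set.ncard_image_of_injective _ hΦ, Set.ncard_univ, Nat.card_eq_fintype_card]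
    simp [hcκ]
  rw [← hcard]
  exact Set.ncard_le_ncard hsub (Set.toFinite _)
end
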